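/- arXiv:2508.08335 — 6 statements merged into one kernel-verified Lean document; each statement's English description precedes it below -/
import Mathlib

section
/- If c_1 < c_2 < c_3 < ... is the increasing enumeration of the cyclic numbers, then the ratio c_{n+1}/c_n tends to 1 as n → ∞. -/
open Filter Asymptotics Real

/-- A positive integer `n` is *cyclic* if `gcd(n, φ(n)) = 1`. -/
def IsCyclicNum (n : ℕ) : Prop := 0 < n ∧ Nat.gcd n (Nat.totient n) = 1

instance : DecidablePred IsCyclicNum := fun n =>
  decidable_of_iff (0 < n ∧ Nat.gcd n (Nat.totient n) = 1) Iff.rfl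

/-- The `n`-th cyclic number, indexed from 1: `cyclicNum 1 = 1`, `cyclicNum 2 = 2`, .... -/
noncomputable def cyclicNum (n : ℕ) : ℕ := Nat.nth IsCyclicNum (n - 1)

/-- The number of cyclic numbers less than or equal to the real number `x`. -/
noncomputable def cyclicCount (x : ℝ) : ℕ :=
  ((Finset.range (⌊x⌋₊ + 1)).filter IsCyclicNum).card

theorem pi_small (δ : ℝ) (hδ : 0 < δ) :
    ∃ N0 : ℕ, ∀ n : ℕ, N0 ≤ n → (Nat.primeCounting n : ℝ) ≤ δ * n := by
  have h1 := Chebyshev.eventually_primeCounting_le (ε := 1) one_pos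
  have h2 : ∀ᶠ x : ℝ in atTop, (Real.log 4 + 1) / δ ≤ Real.log x :=
    Real.tendsto_log_atTop.eventually_ge_atTop _
  have h3 := tendsto_natCast_atTop_atTop.eventually (h1.and (h2.and (eventually_gt_atTop (1:ℝ))))
  obtain ⟨N0, hN⟩ := eventually_atTop.1 h3
  refine ⟨N0, fun n hn => ?_⟩
  obtain ⟨ha, hb, hc⟩ := hN n hn
  rw [Nat.floor_natCast] at ha
  refine ha.trans ?_
  have hl : 0 < Real.log n := Real.log_pos hc
  rw [div_le_iff₀ hl]
  rw [div_le_iff₀ hδ] at hb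
  have : (0:ℝ) ≤ n := by positivity
  nlinarith

theorem tail_dyadic (δ : ℝ) (N0 : ℕ) (h : ∀ n : ℕ, N0 ≤ n → (Nat.primeCounting n : ℝ) ≤ δ * n)
    (z : ℕ) (hz : N0 ≤ z) (hz0 : 0 < z) (J : ℕ) :
    ∑ p ∈ (Finset.Ioc z (z * 2 ^ J)).filter Nat.Prime, (1:ℝ) / (p:ℝ) ^ 2
      ≤ 4 * δ / z * (1 - (1/2) ^ J) := by
  induction J with
  | zero => simp
  | succ J ih =>
    have hle : z * 2 ^ J ≤ z * 2 ^ (J+1) := by gcongr <;> omega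
    have hle0 : z ≤ z * 2 ^ J := Nat.le_mul_of_pos_right _ (by positivity)
    have hs : Finset.Ioc z (z * 2 ^ (J+1)) = Finset.Ioc z (z * 2 ^ J) ∪ Finset.Ioc (z * 2 ^ J) (z * 2 ^ (J+1)) :=
      (Finset.Ioc_union_Ioc_eq_Ioc hle0 hle).symm
    rw [hs, Finset.filter_union]
    have hd : Disjoint ((Finset.Ioc z (z * 2 ^ J)).filter Nat.Prime)
        ((Finset.Ioc (z * 2 ^ J) (z * 2 ^ (J+1))).filter Nat.Prime) := by
      apply Finset.disjoint_filter_filter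
      exact Finset.Ioc_disjoint_Ioc_of_le le_rfl
    rw [Finset.sum_union hd]
    have hy : (0:ℝ) < z * 2 ^ J := by positivity
    have hcard : (((Finset.Ioc (z * 2 ^ J) (z * 2 ^ (J+1))).filter Nat.Prime).card : ℝ) ≤ δ * (z * 2 ^ (J+1)) := by
      have := h (z * 2 ^ (J+1)) (hz.trans (hle0.trans hle))
      push_cast at this
      refine le_trans ?_ this
      rw [← Nat.primesLE_card_eq_primeCounting]
      norm_cast
      apply Finset.card_le_card
      intro p
      simp only [Nat.mem_primesLE, Finset.mem_filter, Finset.mem_Ioc]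
      tauto
    have h2 : ∑ p ∈ (Finset.Ioc (z * 2 ^ J) (z * 2 ^ (J+1))).filter Nat.Prime, (1:ℝ) / (p:ℝ) ^ 2
        ≤ ((Finset.Ioc (z * 2 ^ J) (z * 2 ^ (J+1))).filter Nat.Prime).card • (1 / ((z:ℝ) * 2 ^ J) ^ 2) := by
      apply Finset.sum_le_card_nsmul
      intro p hp
      simp only [Finset.mem_filter, Finset.mem_Ioc] at hp
      have : ((z:ℝ) * 2 ^ J) ≤ p := by exact_mod_cast hp.1.1.le
      gcongr
    rw [nsmul_eq_mul] at h2
    have h3 : ∑ p ∈ (Finset.Ioc (z * 2 ^ J) (z * 2 ^ (J+1))).filter Nat.Prime, (1:ℝ) / (p:ℝ) ^ 2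
        ≤ δ * (z * 2 ^ (J+1)) * (1 / ((z:ℝ) * 2 ^ J) ^ 2) := h2.trans (by gcongr)
    have h4 : δ * (z * 2 ^ (J+1)) * (1 / ((z:ℝ) * 2 ^ J) ^ 2) = 2 * δ / z * (1/2)^J := by
      have : (z:ℝ) ≠ 0 := by positivity
      rw [one_div_pow]
      field_simp
      ring
    rw [h4] at h3
    refine (add_le_add ih h3).trans (le_of_eq ?_)
    rw [pow_succ]; ring

theorem tail_small (δ : ℝ) (hδ : 0 < δ) : ∃ N0 : ℕ, ∀ z : ℕ, N0 ≤ z → 0 < z → ∀ Y : ℕ,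
    ∑ p ∈ (Finset.Ioc z Y).filter Nat.Prime, (1:ℝ) / (p:ℝ) ^ 2 ≤ δ / z := by
  obtain ⟨N0, hN⟩ := pi_small (δ/4) (by positivity)
  refine ⟨N0, fun z hz hz0 Y => ?_⟩
  have h := tail_dyadic (δ/4) N0 hN z hz hz0 Y
  have h1 : ∑ p ∈ (Finset.Ioc z Y).filter Nat.Prime, (1:ℝ) / (p:ℝ) ^ 2 ≤
      ∑ p ∈ (Finset.Ioc z (z * 2 ^ Y)).filter Nat.Prime, (1:ℝ) / (p:ℝ) ^ 2 := by
    apply Finset.sum_le_sum_of_subset_of_nonneg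
    · apply Finset.filter_subset_filter
      apply Finset.Ioc_subset_Ioc le_rfl
      have : Y < 2 ^ Y := Nat.lt_two_pow_self
      nlinarith
    · intros; positivity
  refine h1.trans (h.trans ?_)
  have : 4 * (δ/4) / z = δ / z := by ring
  rw [this]
  have h5 : (0:ℝ) ≤ (1/2)^Y := by positivity
  have h6 : 0 ≤ δ / z := by positivity
  nlinarith

theorem ap_count (A : Finset ℕ) (x H M : ℕ) (hM : 0 < M) (hA : A ⊆ Finset.Ioc x (x + H))
    (hmod : ∀ a ∈ A, ∀ b ∈ A, a ≡ b [MOD M]) : (A.card : ℝ) ≤ H / M + 2 := by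
  have h1 : A.card ≤ (Finset.Icc (x / M) ((x + H) / M)).card := by
    apply Finset.card_le_card_of_injOn (fun a => a / M)
    · intro a ha
      have := Finset.mem_Ioc.1 (hA ha)
      simp only [Finset.coe_Icc, Set.mem_Icc]
      exact ⟨Nat.div_le_div_right this.1.le, Nat.div_le_div_right this.2⟩
    · intro a ha b hb hab
      have h := hmod a ha b hb
      simp only at hab
      rw [← Nat.div_add_mod a M, ← Nat.div_add_mod b M, hab, h]
  rw [Nat.card_Icc] at h1
  have h2 : (x + H) / M ≤ x / M + H / M + 1 := by
    rw [Nat.add_div hM]; split_ifs <;> omega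
  have h3 : A.card ≤ H / M + 2 := by
    generalize H / M = u at *
    omega
  calc (A.card : ℝ) ≤ ((H / M + 2 : ℕ) : ℝ) := by exact_mod_cast h3
    _ ≤ H / M + 2 := by push_cast; gcongr; exact Nat.cast_div_le

theorem ap_lower (x H P : ℕ) (hP : 0 < P) :
    (H : ℝ) / P - 1 ≤ (((Finset.Ioc x (x + H)).filter (fun n => n ≡ 1 [MOD P])).card : ℝ) := by
  have h := Nat.Ioc_filter_modEq_card x (x+H) hP 1
  have h' : (((Finset.Ioc x (x + H)).filter (fun n => n ≡ 1 [MOD P])).card : ℝ) ≥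
    ((⌊((x+H : ℕ) - (1:ℕ) : ℚ) / P⌋ - ⌊((x:ℕ) - (1:ℕ) : ℚ) / P⌋ : ℤ) : ℝ) := by
    have : (((Finset.Ioc x (x + H)).filter (fun n => n ≡ 1 [MOD P])).card : ℤ) ≥ 
      (⌊((x+H : ℕ) - (1:ℕ) : ℚ) / P⌋ - ⌊((x:ℕ) - (1:ℕ) : ℚ) / P⌋ : ℤ) := by
      rw [h]; exact le_max_left _ _
    exact_mod_cast this
  refine le_trans ?_ h'
  have e1 := Int.lt_floor_add_one (((x+H : ℕ) - (1:ℕ) : ℚ) / P)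
  have e2 := Int.floor_le (((x:ℕ) - (1:ℕ) : ℚ) / P)
  have e3 : (((x+H : ℕ) - (1:ℕ) : ℚ) / P) = ((x:ℕ) - (1:ℕ) : ℚ) / P + H / P := by push_cast; ring
  have e4 : (H:ℚ) / P - 1 ≤ ((⌊((x+H : ℕ) - (1:ℕ) : ℚ) / P⌋ - ⌊((x:ℕ) - (1:ℕ) : ℚ) / P⌋ : ℤ) : ℚ) := by
    push_cast at *; linarith
  have e5 := (Rat.cast_le (K := ℝ)).2 e4
  rw [Rat.cast_intCast] at e5
  refine le_trans (le_of_eq ?_) e5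
  push_cast
  rfl

theorem not_cyclic_form (n z : ℕ) (hn : 0 < n) (h1 : n ≡ 1 [MOD primorial z]) (hc : ¬ IsCyclicNum n) :
    ∃ p, p.Prime ∧ z < p ∧ ∃ a ∈ Finset.range 2, ∃ k m, 0 < k ∧ 0 < m ∧ n = p * m * (a + k * p) := by
  have hg : Nat.gcd n (Nat.totient n) ≠ 1 := fun h => hc ⟨hn, h⟩
  obtain ⟨p, hp, hpd⟩ := Nat.exists_prime_and_dvd hg
  have hpn := hpd.trans (Nat.gcd_dvd_left _ _)
  have hpt := hpd.trans (Nat.gcd_dvd_right _ _)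
  refine ⟨p, hp, ?_, ?_⟩
  · by_contra hlt
    have hd : p ∣ primorial z := by
      apply Finset.dvd_prod_of_mem
      simp [Finset.mem_filter, hp]; omega
    have := (h1.of_dvd hd)
    have h0 : n ≡ 0 [MOD p] := (Nat.modEq_zero_iff_dvd.2 hpn)
    have := (this.symm.trans h0)
    have := (Nat.modEq_zero_iff_dvd.1 this)
    exact hp.one_lt.ne' (Nat.dvd_one.1 this)
  · rw [Nat.totient_eq_prod_factorization hn.ne', Finsupp.prod] at hpt
    obtain ⟨q, hq, hpq⟩ := (hp.prime.dvd_finsetProd_iff _).1 hpt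
    have hqp : q.Prime := Nat.prime_of_mem_primeFactors (by simpa using hq)
    have hqn : q ∣ n := Nat.dvd_of_mem_primeFactors (by simpa using hq)
    rcases hp.dvd_mul.1 hpq with h | h
    · have hpq' : p ∣ q := hp.dvd_of_dvd_pow h
      have : p = q := (Nat.prime_dvd_prime_iff_eq hp hqp).1 hpq'
      subst this
      have he : p ^ 2 ∣ n := by
        rw [hp.pow_dvd_iff_le_factorization hn.ne']
        by_contra hlt
        have : n.factorization p - 1 = 0 := by omega
        rw [this, pow_zero] at h
        exact hp.one_lt.ne' (Nat.dvd_one.1 h)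
      obtain ⟨m, hm⟩ := he
      refine ⟨0, by simp, 1, m, one_pos, Nat.pos_of_ne_zero ?_, ?_⟩
      · rintro rfl; omega
      · rw [hm]; ring
    · obtain ⟨k, hk⟩ := h
      have hne : p ≠ q := by
        rintro rfl
        have h2 := hp.two_le
        have hk0 : k ≠ 0 := by rintro rfl; omega
        have : p ≤ p * k := Nat.le_mul_of_pos_right _ (Nat.pos_of_ne_zero hk0)
        omega
      have hco : Nat.Coprime p q := (Nat.coprime_primes hp hqp).2 hne
      obtain ⟨m, hm⟩ := hco.mul_dvd_of_dvd_of_dvd hpn hqn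
      have h2 := hqp.two_le
      refine ⟨1, by simp, k, m, Nat.pos_of_ne_zero ?_, Nat.pos_of_ne_zero ?_, ?_⟩
      · rintro rfl; omega
      · rintro rfl; omega
      · have : q = 1 + k * p := by rw [mul_comm k p]; omega
        rw [hm, ← this]; ring

theorem cls_count (x H P D D0 : ℕ) (B : Finset ℕ) (hP : 0 < P) (hD0 : 0 < D0) (hD : D0 ≤ D)
    (hB : B ⊆ (Finset.Ioc x (x + H)).filter (fun n => n ≡ 1 [MOD P]))
    (hmod : ∀ a ∈ B, ∀ b ∈ B, a ≡ b [MOD D]) (hco : ∀ a ∈ B, Nat.Coprime P D) :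
    (B.card : ℝ) ≤ H / (P * D0) + 2 := by
  have h := ap_count B x H (P * D) (Nat.mul_pos hP (hD0.trans_le hD))
    (hB.trans (Finset.filter_subset _ _)) ?_
  · refine h.trans ?_
    push_cast
    have : (0:ℝ) < P := by exact_mod_cast hP
    have : (0:ℝ) < D0 := by exact_mod_cast hD0
    have : (D0:ℝ) ≤ D := by exact_mod_cast hD
    gcongr
  · intro a ha b hb
    rw [← Nat.modEq_and_modEq_iff_modEq_mul (hco a ha)]
    refine ⟨?_, hmod a ha b hb⟩
    exact (Finset.mem_filter.1 (hB ha)).2.trans (Finset.mem_filter.1 (hB hb)).2.symm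

theorem cop_of_modEq {n P d : ℕ} (h : n ≡ 1 [MOD P]) (hd : d ∣ n) : Nat.Coprime P d := by
  have h1 : Nat.gcd n P = 1 := by
    have := h.gcd_eq
    simpa using this
  exact (Nat.Coprime.coprime_dvd_left hd h1).symm

theorem harm_le (N S : ℕ) (h : N ≤ S) (hS : 0 < S) :
    ∑ k ∈ Finset.Icc 1 N, (1:ℝ) / k ≤ 1 + Real.log S := by
  have h1 : ∑ k ∈ Finset.Icc 1 N, (1:ℝ) / k ≤ ∑ k ∈ Finset.Icc 1 S, (1:ℝ) / k := by
    apply Finset.sum_le_sum_of_subset_of_nonneg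
    · exact Finset.Icc_subset_Icc le_rfl h
    · intros; positivity
  refine h1.trans ?_
  have := harmonic_le_one_add_log S
  rw [harmonic_eq_sum_Icc] at this
  push_cast at this
  simpa using this

theorem bad_count (x H z S : ℕ) (hS : S = Nat.sqrt (x + H)) (hS0 : 0 < S) :
    ((((Finset.Ioc x (x + H)).filter (fun n => n ≡ 1 [MOD primorial z])).filter
      (fun n => ¬ IsCyclicNum n)).card : ℝ) ≤
    4 * ((H:ℝ) / primorial z) * (1 + Real.log S) *
      (∑ p ∈ (Finset.Ioc z S).filter Nat.Prime, (1:ℝ) / (p:ℝ) ^ 2) + 8 * S * (1 + Real.log S) := by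
  classical
  set P := primorial z with hPdef
  have hP : 0 < P := primorial_pos z
  have hPR : (0:ℝ) < P := by exact_mod_cast hP
  set A := (Finset.Ioc x (x + H)).filter (fun n => n ≡ 1 [MOD P]) with hA
  set Q := (Finset.Ioc z S).filter Nat.Prime with hQ
  let U : ℕ → ℕ → ℕ → Finset ℕ := fun p k a => A.filter (fun n => p * (a + k * p) ∣ n)
  let V : ℕ → ℕ → ℕ → Finset ℕ := fun p k a => A.filter (fun n => n ≡ p * k * a [MOD p ^ 2 * k])
  have hsub : A.filter (fun n => ¬ IsCyclicNum n) ⊆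
      Q.biUnion (fun p => (Finset.Icc 1 (S / p)).biUnion (fun k =>
        (Finset.range 2).biUnion (fun a => U p k a ∪ V p k a))) := by
    intro n hn
    obtain ⟨hnA, hnc⟩ := Finset.mem_filter.1 hn
    obtain ⟨hnI, hn1⟩ := Finset.mem_filter.1 hnA
    rw [Finset.mem_Ioc] at hnI
    obtain ⟨p, hp, hzp, a, ha, k, m, hk, hm, hnf⟩ := not_cyclic_form n z (by omega) hn1 hnc
    have hle : (p * k) * (p * m) ≤ x + H := by
      refine le_trans ?_ hnI.2
      rw [hnf]
      have : k * p ≤ a + k * p := by omega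
      calc (p * k) * (p * m) = p * m * (k * p) := by ring
        _ ≤ _ := Nat.mul_le_mul_left _ this
    have hor : p * k ≤ S ∨ p * m ≤ S := by
      by_contra hcon
      push Not at hcon
      have h1 : x + H < (S + 1) * (S + 1) := by rw [hS]; exact Nat.lt_succ_sqrt _
      have := Nat.mul_le_mul (Nat.succ_le_of_lt hcon.1) (Nat.succ_le_of_lt hcon.2)
      simp only [Nat.succ_eq_add_one] at this
      omega
    have hpp : 0 < p := hp.pos
    have key : ∀ j, 0 < j → p * j ≤ S → p ∈ Q ∧ j ∈ Finset.Icc 1 (S / p) := by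
      intro j hj hjS
      have : p ≤ p * j := Nat.le_mul_of_pos_right _ hj
      refine ⟨?_, ?_⟩
      · simp only [hQ, Finset.mem_filter, Finset.mem_Ioc]
        exact ⟨⟨hzp, by omega⟩, hp⟩
      · rw [Finset.mem_Icc]
        exact ⟨hj, (Nat.le_div_iff_mul_le hpp).2 (by rw [mul_comm]; exact hjS)⟩
    simp only [Finset.mem_biUnion, Finset.mem_union]
    rcases hor with h | h
    · obtain ⟨h1, h2⟩ := key k hk h
      refine ⟨p, h1, k, h2, a, ha, Or.inl ?_⟩
      refine Finset.mem_filter.2 ⟨hnA, m, ?_⟩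
      rw [hnf]; ring
    · obtain ⟨h1, h2⟩ := key m hm h
      refine ⟨p, h1, m, h2, a, ha, Or.inr ?_⟩
      refine Finset.mem_filter.2 ⟨hnA, ?_⟩
      have : n = p * m * a + (p ^ 2 * m) * k := by rw [hnf]; ring
      rw [this]
      simp [Nat.ModEq]
  have hU : ∀ p ∈ Q, ∀ k ∈ Finset.Icc 1 (S / p), ∀ a, ((U p k a).card : ℝ) ≤ H / (P * (p ^ 2 * k : ℕ)) + 2 := by
    intro p hp k hk a
    have hpp : 0 < p := (Finset.mem_filter.1 hp).2.pos
    have hk0 : 0 < k := (Finset.mem_Icc.1 hk).1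
    apply cls_count x H P (p * (a + k * p)) (p ^ 2 * k) (U p k a) hP (by positivity)
    · nlinarith [Nat.zero_le (p * a)]
    · exact Finset.filter_subset _ _
    · intro b hb c hc
      exact (Nat.modEq_zero_iff_dvd.2 (Finset.mem_filter.1 hb).2).trans
        (Nat.modEq_zero_iff_dvd.2 (Finset.mem_filter.1 hc).2).symm
    · intro b hb
      obtain ⟨h1, h2⟩ := Finset.mem_filter.1 hb
      exact cop_of_modEq (Finset.mem_filter.1 h1).2 h2
  have hV : ∀ p ∈ Q, ∀ k ∈ Finset.Icc 1 (S / p), ∀ a, ((V p k a).card : ℝ) ≤ H / (P * (p ^ 2 * k : ℕ)) + 2 := by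
    intro p hp k hk a
    have hpp : 0 < p := (Finset.mem_filter.1 hp).2.pos
    have hk0 : 0 < k := (Finset.mem_Icc.1 hk).1
    apply cls_count x H P (p ^ 2 * k) (p ^ 2 * k) (V p k a) hP (by positivity) le_rfl
    · exact Finset.filter_subset _ _
    · intro b hb c hc
      exact (Finset.mem_filter.1 hb).2.trans (Finset.mem_filter.1 hc).2.symm
    · intro b hb
      obtain ⟨h1, h2⟩ := Finset.mem_filter.1 hb
      have h3 : p * k ∣ b := by
        have h4 : p * k ∣ p ^ 2 * k := ⟨p, by ring⟩
        exact ((h2.of_dvd h4).dvd_iff dvd_rfl).2 (dvd_mul_right _ _)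
      have h5 := cop_of_modEq (Finset.mem_filter.1 h1).2 h3
      have h6 : Nat.Coprime P p := h5.coprime_dvd_right (dvd_mul_right _ _)
      have : p ^ 2 * k = p * (p * k) := by ring
      rw [this]
      exact h6.mul_right h5
  have hc1 : ((A.filter (fun n => ¬ IsCyclicNum n)).card : ℝ) ≤
      ∑ p ∈ Q, ∑ k ∈ Finset.Icc 1 (S / p), ∑ a ∈ Finset.range 2,
        (((U p k a).card : ℝ) + (V p k a).card) := by
    have : (A.filter (fun n => ¬ IsCyclicNum n)).card ≤
      ∑ p ∈ Q, ∑ k ∈ Finset.Icc 1 (S / p), ∑ a ∈ Finset.range 2,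
        ((U p k a).card + (V p k a).card) := by
      refine (Finset.card_le_card hsub).trans ?_
      refine Finset.card_biUnion_le.trans (Finset.sum_le_sum fun p _ => ?_)
      refine Finset.card_biUnion_le.trans (Finset.sum_le_sum fun k _ => ?_)
      refine Finset.card_biUnion_le.trans (Finset.sum_le_sum fun a _ => ?_)
      exact Finset.card_union_le _ _
    exact_mod_cast this
  refine hc1.trans ?_
  have hlog : 0 ≤ Real.log S := Real.log_natCast_nonneg S
  have hin : ∀ p ∈ Q, ∑ k ∈ Finset.Icc 1 (S / p), ∑ a ∈ Finset.range 2,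
        (((U p k a).card : ℝ) + (V p k a).card) ≤
        4 * ((H:ℝ) / P) * (1 + Real.log S) * (1 / (p:ℝ) ^ 2) + 8 * S * (1 / p) := by
    intro p hp
    have hpp : 0 < p := (Finset.mem_filter.1 hp).2.pos
    have hpR : (0:ℝ) < p := by exact_mod_cast hpp
    calc ∑ k ∈ Finset.Icc 1 (S / p), ∑ a ∈ Finset.range 2,
        (((U p k a).card : ℝ) + (V p k a).card)
        ≤ ∑ k ∈ Finset.Icc 1 (S / p), (4 * ((H:ℝ) / P) * (1 / (p:ℝ) ^ 2) * (1 / (k:ℝ)) + 8) := by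
          apply Finset.sum_le_sum
          intro k hk
          have hk0 : 0 < k := (Finset.mem_Icc.1 hk).1
          have hkR : (0:ℝ) < k := by exact_mod_cast hk0
          have e : (H:ℝ) / (P * (p ^ 2 * k : ℕ)) = ((H:ℝ) / P) * (1 / (p:ℝ) ^ 2) * (1 / (k:ℝ)) := by
            push_cast; field_simp
          have u0 := hU p hp k hk 0
          have u1 := hU p hp k hk 1
          have v0 := hV p hp k hk 0
          have v1 := hV p hp k hk 1
          rw [e] at u0 u1 v0 v1
          rw [Finset.sum_range_succ, Finset.sum_range_one]
          linarith
      _ = 4 * ((H:ℝ) / P) * (1 / (p:ℝ) ^ 2) * (∑ k ∈ Finset.Icc 1 (S / p), (1 / (k:ℝ))) + 8 * (S / p : ℕ) := by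
          rw [Finset.sum_add_distrib, ← Finset.mul_sum]
          simp
          ring
      _ ≤ 4 * ((H:ℝ) / P) * (1 / (p:ℝ) ^ 2) * (1 + Real.log S) + 8 * (S / p) := by
          gcongr
          · exact harm_le _ _ (Nat.div_le_self _ _) hS0
          · exact Nat.cast_div_le
      _ = _ := by ring
  refine (Finset.sum_le_sum hin).trans ?_
  rw [Finset.sum_add_distrib, ← Finset.mul_sum, ← Finset.mul_sum]
  gcongr
  refine le_trans ?_ (harm_le S S le_rfl hS0)
  apply Finset.sum_le_sum_of_subset_of_nonneg
  · intro p hp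
    have := Finset.mem_filter.1 hp
    rw [Finset.mem_Ioc] at this
    exact Finset.mem_Icc.2 ⟨by omega, by omega⟩
  · intros; positivity

theorem num_contra (ε x r w H : ℝ) (hε : 0 < ε) (hrr : r * r = x) (hrw : w ^ 4 ≤ r) (hw1 : 1 ≤ w)
    (hεw : 5000 ≤ ε * w) (hH : ε * x < H + 1) (h2 : H ≤ w * (2 + 1088 * r * w)) : False := by
  have hr1 : 1 ≤ r := (one_le_pow₀ hw1).trans hrw
  have hww : w ≤ w ^ 2 := by nlinarith
  have hw2 : w ^ 2 ≤ r * w ^ 2 := le_mul_of_one_le_left (by positivity) hr1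
  have h3 : w * (2 + 1088 * r * w) ≤ 1090 * (r * w ^ 2) := by
    have : w * (2 + 1088 * r * w) = 2 * w + 1088 * (r * w ^ 2) := by ring
    rw [this]; linarith
  have h4 : ε * x ≤ 1091 * (r * w ^ 2) := by linarith
  have h5 : 5000 * w ^ 2 ≤ ε * r := by
    calc 5000 * w ^ 2 ≤ (ε * w) * w ^ 3 := by
          have : w ^ 2 ≤ w ^ 3 := pow_le_pow_right₀ hw1 (by norm_num)
          gcongr
      _ = ε * w ^ 4 := by ring
      _ ≤ _ := by gcongr
  have h6 : ε * x = (ε * r) * r := by rw [← hrr]; ring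
  have h7 : 5000 * w ^ 2 * r ≤ (ε * r) * r := by gcongr
  have h8 : 5000 * w ^ 2 * r = 5000 * (r * w ^ 2) := by ring
  linarith

theorem short_interval (ε : ℝ) (hε : 0 < ε) (hε1 : ε ≤ 1) :
    ∃ X0 : ℕ, ∀ x : ℕ, X0 ≤ x → ∃ n, x < n ∧ (n:ℝ) ≤ (1 + ε) * x ∧ IsCyclicNum n := by
  obtain ⟨N0, hN0⟩ := tail_small (1/272) (by norm_num)
  obtain ⟨N1, hN1⟩ := exists_nat_ge (5000 / ε)
  set Z := N0 + N1 + 1 with hZ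
  refine ⟨2 ^ (16 * Z), fun x hx => ?_⟩
  set z := Nat.log 2 x / 16 with hz
  have hx0 : x ≠ 0 := by
    have : 0 < 2 ^ (16 * Z) := by positivity
    omega
  have hlog : 16 * Z ≤ Nat.log 2 x := Nat.le_log_of_pow_le (by norm_num) hx
  have hZz : Z ≤ z := by omega
  have hz1 : 1 ≤ z := by omega
  set P := primorial z with hPdef
  have hP : 0 < P := primorial_pos z
  set H := ⌊ε * x⌋₊ with hH
  set S := Nat.sqrt (x + H) with hS
  have hS0 : 0 < S := Nat.sqrt_pos.2 (by omega)
  have hHle : (H:ℝ) ≤ ε * x := Nat.floor_le (by positivity)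
  have hHgt : ε * x < H + 1 := Nat.lt_floor_add_one _
  have hxR : (0:ℝ) < x := by positivity
  have hHx : (H:ℝ) ≤ x := hHle.trans (by nlinarith)
  by_contra hcon
  push Not at hcon
  have hall : ((Finset.Ioc x (x + H)).filter (fun n => n ≡ 1 [MOD P])).filter
      (fun n => ¬ IsCyclicNum n) = (Finset.Ioc x (x + H)).filter (fun n => n ≡ 1 [MOD P]) := by
    apply Finset.filter_true_of_mem
    intro n hn
    have := Finset.mem_Ioc.1 (Finset.mem_filter.1 hn).1
    apply hcon n this.1
    have h2 : (n:ℝ) ≤ x + H := by exact_mod_cast this.2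
    linarith
  have hb := bad_count x H z S hS hS0
  have hlow := ap_lower x H P hP
  rw [← hPdef, hall] at hb
  have hT := hN0 z (by omega) (by omega) S
  have hzR : (1:ℝ) ≤ z := by exact_mod_cast hz1
  have hSS : S * S ≤ x + H := Nat.sqrt_le _
  have hSSR : (S:ℝ) * S ≤ 2 * x := by
    have : (S:ℝ) * S ≤ x + H := by exact_mod_cast hSS
    linarith
  have hSR : (1:ℝ) ≤ S := by exact_mod_cast hS0
  -- log bound
  have hlogS : 1 + Real.log S ≤ 34 * z := by
    have h1 : 2 * Real.log S ≤ Real.log 2 + Real.log x := by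
      rw [← Real.log_mul (by norm_num) hxR.ne', two_mul, ← Real.log_mul (by positivity) (by positivity)]
      exact Real.log_le_log (by positivity) hSSR
    have h2 : x < 2 ^ (Nat.log 2 x + 1) := Nat.lt_pow_succ_log_self (by norm_num) x
    have h3 : Nat.log 2 x + 1 ≤ 16 * z + 16 := by omega
    have h4 : (x:ℝ) ≤ 2 ^ (16 * z + 16) := by
      have := h2.le.trans (Nat.pow_le_pow_right (by norm_num) h3)
      exact_mod_cast this
    have h5 : Real.log x ≤ (16 * z + 16) * Real.log 2 := by
      have := Real.log_le_log hxR h4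
      rw [Real.log_pow] at this
      exact_mod_cast this
    have h6 : Real.log 2 ≤ 1 := by linarith [Real.log_two_lt_d9]
    have h7 : (16 * (z:ℝ) + 16) * Real.log 2 ≤ (16 * z + 16) * 1 := by gcongr
    linarith
  have hlogS0 : 0 ≤ 1 + Real.log S := by have := Real.log_natCast_nonneg S; linarith
  have hPR : (0:ℝ) < P := by exact_mod_cast hP
  have hmain : 4 * ((H:ℝ) / P) * (1 + Real.log S) *
      (∑ p ∈ (Finset.Ioc z S).filter Nat.Prime, (1:ℝ) / (p:ℝ) ^ 2) ≤ (H:ℝ) / P / 2 := by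
    calc _ ≤ 4 * ((H:ℝ) / P) * (34 * z) * (1 / 272 / z) := by gcongr
      _ = _ := by field_simp; ring
  have herr : 8 * (S:ℝ) * (1 + Real.log S) ≤ 8 * S * (34 * z) := by gcongr
  have hfin : (H:ℝ) / P / 2 ≤ 1 + 272 * S * z := by linarith
  -- contradiction
  have hP4 : (P:ℝ) ≤ 4 ^ z := by exact_mod_cast primorial_le_four_pow z
  set w : ℝ := 4 ^ z with hw
  have hwz : (z:ℝ) ≤ w := by
    have : z < 4 ^ z := Nat.lt_pow_self (by norm_num)
    rw [hw]; exact_mod_cast this.le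
  have hxw : w ^ 8 ≤ x := by
    have h1 : 2 ^ Nat.log 2 x ≤ x := Nat.pow_log_le_self 2 hx0
    have h2 : 2 ^ (16 * z) ≤ x := (Nat.pow_le_pow_right (by norm_num) (by omega)).trans h1
    have h3 : w ^ 8 = ((2 ^ (16 * z) : ℕ) : ℝ) := by
      rw [hw, show (4:ℝ) = 2 ^ 2 by norm_num]; push_cast; rw [← pow_mul, ← pow_mul]; congr 1; ring
    rw [h3]; exact_mod_cast h2
  set r := Real.sqrt x with hr
  have hrr : r * r = x := Real.mul_self_sqrt hxR.le
  have hr0 : 0 < r := Real.sqrt_pos.2 hxR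
  have hrw : w ^ 4 ≤ r := by
    apply Real.le_sqrt_of_sq_le
    calc (w ^ 4) ^ 2 = w ^ 8 := by ring
      _ ≤ (x:ℝ) := hxw
  have hSr : (S:ℝ) ≤ 2 * r := by
    by_contra hlt
    push Not at hlt
    nlinarith
  have hw1 : 1 ≤ w := hzR.trans hwz
  have hεw : 5000 ≤ ε * w := by
    have h1 : (N1:ℝ) ≤ w := by
      refine le_trans ?_ hwz
      exact_mod_cast (by omega : N1 ≤ z)
    have h2 := hN1.trans h1
    rw [div_le_iff₀ hε] at h2
    linarith
  have h1 : (H:ℝ) ≤ P * (2 + 544 * S * z) := by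
    rw [div_div, div_le_iff₀ (by positivity)] at hfin
    linarith
  have h2 : (H:ℝ) ≤ w * (2 + 1088 * r * w) := by
    refine h1.trans ?_
    have : 544 * (S:ℝ) * z ≤ 1088 * r * w := by
      calc 544 * (S:ℝ) * z ≤ 544 * (2 * r) * w := by gcongr
        _ = _ := by ring
    gcongr
  exact num_contra ε x r w H hε hrr hrw hw1 hεw hHgt h2

theorem cyc_infinite : (Set.ofPred IsCyclicNum).Infinite := by
  apply Nat.infinite_setOfPred_prime.mono
  intro p hp
  refine ⟨hp.pos, ?_⟩
  rw [Nat.totient_prime hp]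
  exact (Nat.coprime_self_sub_right hp.one_le).2 (by simp)

theorem cyclicNum_succ_div_tendsto_one :
    Tendsto (fun n : ℕ => (cyclicNum (n + 1) : ℝ) / (cyclicNum n : ℝ)) atTop (nhds 1) := by
  rw [Metric.tendsto_atTop]
  intro ε hε
  obtain ⟨X0, hX⟩ := short_interval (min (ε / 2) 1) (by positivity) (min_le_right _ _)
  refine ⟨X0 + 1, fun n hn => ?_⟩
  obtain ⟨m, rfl⟩ : ∃ m, n = m + 1 := ⟨n - 1, by omega⟩
  have hcm : cyclicNum (m + 1) = Nat.nth IsCyclicNum m := rfl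
  have hcs : cyclicNum (m + 1 + 1) = Nat.nth IsCyclicNum (m + 1) := rfl
  rw [hcm, hcs]
  have hge : m ≤ Nat.nth IsCyclicNum m := (Nat.nth_strictMono cyc_infinite).le_apply
  obtain ⟨c, hc1, hc2, hc3⟩ := hX (Nat.nth IsCyclicNum m) (by omega)
  have hpos : 0 < Nat.nth IsCyclicNum m := (Nat.nth_mem_of_infinite cyc_infinite m).1
  have hlt : Nat.nth IsCyclicNum m < Nat.nth IsCyclicNum (m + 1) :=
    Nat.nth_strictMono cyc_infinite (Nat.lt_succ_self m)
  have hle : Nat.nth IsCyclicNum (m + 1) ≤ c := by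
    by_contra hcon
    push Not at hcon
    exact absurd hc3 (fun h => by
      have := Nat.le_nth_of_lt_nth_succ hcon h
      omega)
  have hposR : (0:ℝ) < Nat.nth IsCyclicNum m := by exact_mod_cast hpos
  have h1 : (Nat.nth IsCyclicNum (m + 1) : ℝ) / Nat.nth IsCyclicNum m ≤ 1 + min (ε / 2) 1 := by
    rw [div_le_iff₀ hposR]
    exact le_trans (by exact_mod_cast hle) hc2
  have h2 : 1 ≤ (Nat.nth IsCyclicNum (m + 1) : ℝ) / Nat.nth IsCyclicNum m := by
    rw [le_div_iff₀ hposR, one_mul]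
    exact_mod_cast hlt.le
  have h3 : min (ε / 2) 1 ≤ ε / 2 := min_le_left _ _
  rw [Real.dist_eq, abs_of_nonneg (by linarith)]
  linarith
end

section
/- For positive real x, let C(x) denote the number of cyclic numbers ≤ x. Then log C(x) / log x tends to 1 as x → ∞. -/
open Filter Asymptotics Real

theorem cyclicCount_le_aux (x : ℝ) (hx : 0 ≤ x) : (cyclicCount x : ℝ) ≤ x := by
  have h : cyclicCount x ≤ ⌊x⌋₊ := by
    unfold cyclicCount
    have : ((Finset.range (⌊x⌋₊ + 1)).filter IsCyclicNum) ⊆ Finset.Icc 1 ⌊x⌋₊ := by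
      intro n hn
      simp only [Finset.mem_filter, Finset.mem_range, IsCyclicNum] at hn
      simp only [Finset.mem_Icc]
      omega
    simpa using Finset.card_le_card this
  exact le_trans (by exact_mod_cast h) (Nat.floor_le hx)

theorem prime_isCyclicNum_aux {p : ℕ} (hp : p.Prime) : IsCyclicNum p := by
  refine ⟨hp.pos, ?_⟩
  rw [Nat.totient_prime hp]
  refine (Nat.Prime.coprime_iff_not_dvd hp).2 fun h => ?_
  have := Nat.le_of_dvd (by have := hp.two_le; omega) h
  have := hp.two_le
  omega

theorem pi_le_cyclicCount_aux (x : ℝ) : Nat.primeCounting ⌊x⌋₊ ≤ cyclicCount x := by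
  rw [Nat.primeCounting, Nat.primeCounting', Nat.count_eq_card_filter_range, cyclicCount]
  apply Finset.card_le_card
  intro n hn
  simp only [Finset.mem_filter] at hn ⊢
  exact ⟨hn.1, prime_isCyclicNum_aux hn.2⟩

theorem cyclicCount_ge_aux (x : ℝ) (hx : 100 ≤ x) : x / 4 / Real.log x ≤ cyclicCount x := by
  have hl : 0 < Real.log x := Real.log_pos (by linarith)
  rw [div_le_iff₀ hl]
  have h1 := Chebyshev.psi_ge' (x := x) (by linarith)
  have h2 := Chebyshev.psi_le_primeCounting_mul_log' x
  have h3 : (Nat.primeCounting ⌊x⌋₊ : ℝ) * Real.log x ≤ cyclicCount x * Real.log x :=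
    mul_le_mul_of_nonneg_right (by exact_mod_cast pi_le_cyclicCount_aux x) hl.le
  have h4 : Real.log (x + 2) ≤ (x + 2) / 16 - 1 + 4 * Real.log 2 := by
    have e : Real.log (x + 2) = Real.log ((x + 2) / 16) + Real.log (2 ^ 4) := by
      rw [← Real.log_mul (by positivity) (by norm_num)]
      norm_num
    rw [e, Real.log_pow]
    have := Real.log_le_sub_one_of_pos (x := (x + 2) / 16) (by positivity)
    push_cast
    linarith
  have h5 := Real.log_two_gt_d9
  have h6 := Real.log_two_lt_d9
  nlinarith

theorem log_cyclicCount_div_log_tendsto_one :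
    Tendsto (fun x : ℝ => Real.log (cyclicCount x : ℝ) / Real.log x) atTop (nhds 1) := by
  have hlow : Tendsto (fun x : ℝ => 1 - Real.log 4 / Real.log x -
      Real.log (Real.log x) / Real.log x) atTop (nhds 1) := by
    have a : Tendsto (fun x : ℝ => Real.log 4 / Real.log x) atTop (nhds 0) :=
      Real.tendsto_log_atTop.const_div_atTop _
    have b : Tendsto (fun x : ℝ => Real.log (Real.log x) / Real.log x) atTop (nhds 0) :=
      (Real.isLittleO_log_id_atTop.tendsto_div_nhds_zero).comp Real.tendsto_log_atTop
    simpa using (tendsto_const_nhds (x := (1 : ℝ))).sub a |>.sub b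
  refine tendsto_of_tendsto_of_tendsto_of_le_of_le' hlow tendsto_const_nhds ?_ ?_
  · filter_upwards [eventually_ge_atTop 100] with x hx
    have hl : 0 < Real.log x := Real.log_pos (by linarith)
    have h := Real.log_le_log (by positivity) (cyclicCount_ge_aux x hx)
    rw [Real.log_div (by positivity) hl.ne', Real.log_div (by positivity) (by norm_num)] at h
    have e : 1 - Real.log 4 / Real.log x - Real.log (Real.log x) / Real.log x =
      (Real.log x - Real.log 4 - Real.log (Real.log x)) / Real.log x := by field_simp
    rw [e]
    exact div_le_div_of_nonneg_right h hl.le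
  · filter_upwards [eventually_ge_atTop 100] with x hx
    have hl : 0 < Real.log x := Real.log_pos (by linarith)
    have hc : (0 : ℝ) < cyclicCount x :=
      lt_of_lt_of_le (by positivity) (cyclicCount_ge_aux x hx)
    rw [div_le_one hl]
    exact Real.log_le_log hc (cyclicCount_le_aux x (by linarith))
end

section
/- The analog for cyclic numbers of the second Hardy–Littlewood conjecture is false: there exist positive integers m ≤ n with C(m+n) > C(m) + C(n), where C(x) is the number of cyclic numbers ≤ x. Specifically, C(209) = 71, C(389) = 128, and C(598) = 200, so C(209 + 389) = 200 > 199 = C(209) + C(389). -/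
open Filter Asymptotics Real

/-- The number of cyclic numbers less than or equal to the natural number `x`. -/
def cyclicCountNat (x : ℕ) : ℕ := ((Finset.range (x + 1)).filter IsCyclicNum).card

/-- Fast totient loop: number of `k < m` coprime to `n`. -/
def phiLoop (n m : ℕ) : ℕ :=
  Nat.rec 0 (fun k r => cond (Nat.beq (Nat.gcd n k) 1) (Nat.succ r) r) m

theorem phiLoop_succ (n k : ℕ) : phiLoop n (k + 1) =
    cond (Nat.beq (Nat.gcd n k) 1) (Nat.succ (phiLoop n k)) (phiLoop n k) := rfl

theorem phiLoop_eq (n m : ℕ) :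
    phiLoop n m = ((Finset.range m).filter (fun k => n.Coprime k)).card := by
  induction m with
  | zero => rfl
  | succ k ih =>
    rw [phiLoop_succ, Finset.range_add_one, Finset.filter_insert, ih]
    by_cases h : n.Coprime k
    · rw [if_pos h, Finset.card_insert_of_notMem (by simp),
        show Nat.gcd n k = 1 from h]
      rfl
    · rw [if_neg h, show Nat.beq (Nat.gcd n k) 1 = false from by
        rw [← Bool.not_eq_true, Nat.beq_eq]; exact h]
      rfl

theorem phiLoop_totient (n : ℕ) : phiLoop n n = Nat.totient n := phiLoop_eq n n

/-- Fast count: number of cyclic numbers in `(a, a + d]`. -/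
def cycLoop (a d : ℕ) : ℕ :=
  Nat.rec 0 (fun k r => cond
    (Nat.beq (Nat.gcd (Nat.add a (Nat.succ k))
      (phiLoop (Nat.add a (Nat.succ k)) (Nat.add a (Nat.succ k)))) 1)
    (Nat.succ r) r) d

theorem cycLoop_succ (a k : ℕ) : cycLoop a (k + 1) =
    cond (Nat.beq (Nat.gcd (a + (k + 1)) (phiLoop (a + (k + 1)) (a + (k + 1)))) 1)
      (Nat.succ (cycLoop a k)) (cycLoop a k) := rfl

theorem cycLoop_eq (a d : ℕ) :
    cyclicCountNat (a + d) = cyclicCountNat a + cycLoop a d := by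
  induction d with
  | zero => rfl
  | succ k ih =>
    have hs : cyclicCountNat (a + (k + 1)) =
        cyclicCountNat (a + k) + if IsCyclicNum (a + (k + 1)) then 1 else 0 := by
      unfold cyclicCountNat
      rw [Finset.range_add_one, Finset.filter_insert]
      split_ifs with h
      · rw [Finset.card_insert_of_notMem (by simp)]
        rfl
      · rfl
    rw [hs, ih, cycLoop_succ, phiLoop_totient]
    by_cases h : Nat.gcd (a + (k + 1)) (Nat.totient (a + (k + 1))) = 1
    · rw [if_pos ⟨by omega, h⟩, h]
      rfl
    · rw [if_neg (fun hc => h hc.2), show Nat.beq _ 1 = false from by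
        rw [← Bool.not_eq_true, Nat.beq_eq]; exact h]
      rfl

theorem hardy_littlewood_analog_for_cyclics_false :
    (∃ m n : ℕ, 0 < m ∧ m ≤ n ∧
      cyclicCountNat m + cyclicCountNat n < cyclicCountNat (m + n)) ∧
    cyclicCountNat 209 = 71 ∧ cyclicCountNat 389 = 128 ∧ cyclicCountNat 598 = 200 ∧
    cyclicCountNat 209 + cyclicCountNat 389 < cyclicCountNat (209 + 389) := by
  have h0 : cyclicCountNat 0 = 0 := by decide +kernel
  have e1 : cycLoop 0 209 = 71 := by decide +kernel
  have e2 : cycLoop 209 180 = 57 := by decide +kernel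
  have e3 : cycLoop 389 209 = 72 := by decide +kernel
  have h1 : cyclicCountNat 209 = 71 := by
    have := cycLoop_eq 0 209
    rwa [h0, e1] at this
  have h2 : cyclicCountNat 389 = 128 := by
    have := cycLoop_eq 209 180
    rwa [h1, e2] at this
  have h3 : cyclicCountNat 598 = 200 := by
    have := cycLoop_eq 389 209
    rwa [h2, e3] at this
  have h : cyclicCountNat 209 + cyclicCountNat 389 < cyclicCountNat (209 + 389) := by
    rw [show 209 + 389 = 598 from rfl, h1, h2, h3]
    norm_num
  exact ⟨⟨209, 389, by norm_num, by norm_num, h⟩, h1, h2, h3, h⟩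
end

section
/- The sum of the reciprocals of the cyclic numbers diverges: if c_1 < c_2 < c_3 < ... is the increasing enumeration of the cyclic numbers, then the partial sums of 1/c_j tend to infinity as n → ∞. -/
open Filter Asymptotics Real

theorem sum_one_div_cyclicNum_tendsto_atTop :
    Tendsto (fun n : ℕ => ∑ j ∈ Finset.Icc 1 n, (1 : ℝ) / (cyclicNum j : ℝ)) atTop atTop := by
  have hpc : ∀ p : ℕ, p.Prime → IsCyclicNum p := by
    intro p hp
    refine ⟨hp.pos, ?_⟩
    rw [Nat.totient_prime hp]
    have h := hp.two_le
    exact (Nat.coprime_of_lt_prime (n := p - 1) (by omega) (by omega) hp)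
  have hinf : (Set.ofPred IsCyclicNum).Infinite :=
    Nat.infinite_setOfPred_prime.mono fun p hp => hpc p hp
  have hsum : ∀ n : ℕ, ∑ j ∈ Finset.Icc 1 n, (1 : ℝ) / (cyclicNum j : ℝ)
      = ∑ j ∈ Finset.range n, (1 : ℝ) / (Nat.nth IsCyclicNum j : ℝ) := by
    intro n
    induction n with
    | zero => simp
    | succ k ih =>
      rw [Finset.sum_Icc_succ_top (by omega), ih, Finset.sum_range_succ]
      simp [cyclicNum]
  simp_rw [hsum]
  rw [← not_summable_iff_tendsto_nat_atTop_of_nonneg (fun j => by positivity)]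
  intro hs
  apply not_summable_one_div_on_primes
  have h2 : Summable (Set.indicator (Set.ofPred IsCyclicNum) (fun n : ℕ => (1 : ℝ) / n)) := by
    rw [← (Nat.nth_injective hinf).summable_iff]
    · convert hs using 2 with j
      have : Nat.nth IsCyclicNum j ∈ Set.ofPred IsCyclicNum := Nat.nth_mem_of_infinite hinf j
      simp [Function.comp, Set.indicator_of_mem this]
    · intro x hx
      rw [Nat.range_nth_of_infinite hinf] at hx
      exact Set.indicator_of_notMem hx _
  refine Summable.of_nonneg_of_le (fun n => Set.indicator_nonneg (fun _ _ => by positivity) n)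
    (fun n => ?_) h2
  exact Set.indicator_le_indicator_of_subset (fun p hp => hpc p hp) (fun _ => by positivity) n
end

section
/- Every sufficiently large even positive integer is the sum of two cyclic numbers. -/
open Filter Asymptotics Real

theorem cyc_conflict {a : ℕ} (ha : 0 < a) (h : ¬ IsCyclicNum a) :
    ∃ q, q.Prime ∧ q ∣ a ∧ (q ^ 2 ∣ a ∨ ∃ p, p.Prime ∧ p ∣ a ∧ q ∣ p - 1) := by
  have h1 : Nat.gcd a (Nat.totient a) ≠ 1 := fun h' => h ⟨ha, h'⟩
  obtain ⟨q, hq, hqd⟩ := Nat.exists_prime_and_dvd h1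
  have hqa : q ∣ a := hqd.trans (Nat.gcd_dvd_left _ _)
  have hqt : q ∣ Nat.totient a := hqd.trans (Nat.gcd_dvd_right _ _)
  refine ⟨q, hq, hqa, ?_⟩
  rw [Nat.totient_eq_prod_factorization ha.ne'] at hqt
  obtain ⟨p, hp, hqp⟩ := (hq.prime.dvd_finsuppProd_iff).1 hqt
  have hpp : p.Prime := Nat.prime_of_mem_primeFactors hp
  have hpa : p ∣ a := Nat.dvd_of_mem_primeFactors hp
  rcases (hq.dvd_mul).1 hqp with h2 | h2
  · left
    have hqp' : q = p := (Nat.prime_dvd_prime_iff_eq hq hpp).1 (hq.dvd_of_dvd_pow h2)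
    subst hqp'
    have : a.factorization q - 1 ≠ 0 := by
      intro h0
      rw [h0, pow_zero] at h2
      exact hq.one_lt.ne' (Nat.dvd_one.1 h2)
    exact (hq.pow_dvd_iff_le_factorization ha.ne').2 (by omega)
  · exact Or.inr ⟨p, hpp, hpa, h2⟩

/-- the admissible residues -/
def Adm (P N : ℕ) (x : ZMod P) : Prop := IsUnit x ∧ IsUnit ((N : ZMod P) - x)

open Classical in
/-- number of admissible residues -/
noncomputable def RR (P N : ℕ) [NeZero P] : ℕ := (Finset.univ.filter (Adm P N)).card

theorem RR_pos (z N : ℕ) [NeZero (primorial z)] (hN : Even N) : 0 < RR (primorial z) N := by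
  classical
  unfold RR
  rw [Finset.card_pos]
  set D := ∏ p ∈ (Finset.range (z+1)).filter (fun p => p.Prime ∧ ¬ p ∣ N), p with hD
  have key : ∀ l, l.Prime → l ≤ z → (l ∣ D ↔ ¬ l ∣ N) := by
    intro l hl hlz
    rw [hD, hl.prime.dvd_finsetProd_iff]
    constructor
    · rintro ⟨p, hp, hlp⟩
      simp only [Finset.mem_filter] at hp
      rw [(Nat.prime_dvd_prime_iff_eq hl hp.2.1).1 hlp]
      exact hp.2.2
    · intro h
      exact ⟨l, by simp only [Finset.mem_filter, Finset.mem_range]; exact ⟨by omega, hl, h⟩, dvd_rfl⟩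
  have hc : ∀ c, (c = 1 ∨ c = 2) → Nat.Coprime (c * N + D) (primorial z) := by
    intro c hc
    apply Nat.coprime_of_dvd
    intro l hl h1 h2
    have hlz : l ≤ z := (hl.dvd_primorial_iff).1 h2
    have hk := key l hl hlz
    by_cases hlN : l ∣ N
    · have : l ∣ D := (Nat.dvd_add_right (hlN.mul_left c)).1 h1
      exact (hk.1 this) hlN
    · have hlD := hk.2 hlN
      have h3 : l ∣ c * N := (Nat.dvd_add_left hlD).1 h1
      rcases (hl.dvd_mul).1 h3 with h4 | h4
      · rcases hc with rfl | rfl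
        · exact hl.one_lt.ne' (Nat.dvd_one.1 h4)
        · rw [(Nat.prime_dvd_prime_iff_eq hl Nat.prime_two).1 h4] at hlN
          exact hlN hN.two_dvd
      · exact hlN h4
  refine ⟨((2 * N + D : ℕ) : ZMod (primorial z)), ?_⟩
  rw [Finset.mem_filter]
  refine ⟨Finset.mem_univ _, ?_, ?_⟩
  · exact (ZMod.isUnit_iff_coprime _ _).2 (hc 2 (Or.inr rfl))
  · have h1 := (ZMod.isUnit_iff_coprime _ _).2 (hc 1 (Or.inl rfl))
    rw [← IsUnit.neg_iff] at h1
    convert h1 using 1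
    push_cast
    ring

open Classical in
theorem count_upper (P N : ℕ) [NeZero P] (c d L : ℕ) (hd : Nat.Coprime d P) :
    ((Finset.range L).filter (fun k : ℕ => Adm P N ((c + k * d : ℕ) : ZMod P))).card
      ≤ (L / P + 1) * RR P N := by
  have hP : 0 < P := Nat.pos_of_ne_zero (NeZero.ne P)
  have : (L / P + 1) * RR P N =
      ((Finset.range (L / P + 1)) ×ˢ (Finset.univ.filter (Adm P N))).card := by
    rw [Finset.card_product, Finset.card_range]; rfl
  rw [this]
  apply Finset.card_le_card_of_injOn (fun k => (k / P, ((c + k * d : ℕ) : ZMod P)))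
  · intro k hk
    simp only [Finset.coe_filter, Finset.mem_range, Set.mem_ofPred_eq] at hk
    simp only [Finset.coe_product, Set.mem_prod, Finset.mem_coe, Finset.mem_range,
      Finset.mem_filter, Finset.mem_univ, true_and]
    exact ⟨Nat.lt_succ_of_le (Nat.div_le_div_right hk.1.le), hk.2⟩
  · intro k _ k' _ h
    simp only [Prod.mk.injEq] at h
    obtain ⟨h1, h2⟩ := h
    rw [ZMod.natCast_eq_natCast_iff] at h2
    have h3 : k * d ≡ k' * d [MOD P] := Nat.ModEq.add_left_cancel' c h2
    have h4 : k ≡ k' [MOD P] := Nat.ModEq.cancel_right_of_coprime (by rwa [Nat.Coprime, Nat.gcd_comm] at hd) h3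
    rw [← Nat.div_add_mod k P, ← Nat.div_add_mod k' P, h1, h4]

open Classical in
theorem count_lower (P N : ℕ) [NeZero P] :
    (N / P) * RR P N ≤ ((Finset.range N).filter (fun k : ℕ => Adm P N (k : ZMod P))).card := by
  have hP : 0 < P := Nat.pos_of_ne_zero (NeZero.ne P)
  have : (N / P) * RR P N =
      ((Finset.range (N / P)) ×ˢ (Finset.univ.filter (Adm P N))).card := by
    rw [Finset.card_product, Finset.card_range]; rfl
  rw [this]
  apply Finset.card_le_card_of_injOn (fun x => P * x.1 + x.2.val)
  · rintro ⟨j, x⟩ hx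
    simp only [Finset.coe_product, Set.mem_prod, Finset.mem_coe, Finset.mem_range,
      Finset.mem_filter, Finset.mem_univ, true_and] at hx
    simp only [Finset.coe_filter, Finset.mem_range, Set.mem_ofPred_eq]
    refine ⟨?_, ?_⟩
    · have h1 := ZMod.val_lt x
      have h2 : P * (j + 1) ≤ P * (N / P) := Nat.mul_le_mul_left _ hx.1
      have h3 := Nat.mul_div_le N P
      nlinarith
    · simpa using hx.2
  · rintro ⟨j, x⟩ _ ⟨j', x'⟩ _ h
    simp only at h
    have h1 := ZMod.val_lt x
    have h1' := ZMod.val_lt x'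
    have e1 : (P * j + x.val) / P = j := by
      rw [Nat.mul_add_div hP, Nat.div_eq_of_lt h1, add_zero]
    have e2 : (P * j' + x'.val) / P = j' := by
      rw [Nat.mul_add_div hP, Nat.div_eq_of_lt h1', add_zero]
    have hj : j = j' := by rw [← e1, ← e2, h]
    subst hj
    have : x.val = x'.val := by omega
    rw [ZMod.val_injective P this]

theorem prime_sq_sum (ε : ℝ) (hε : 0 < ε) : ∃ z0 : ℕ, 1 ≤ z0 ∧ ∀ z, z0 ≤ z → ∀ M : ℕ,
    ∑ q ∈ (Finset.Ioc z M).filter Nat.Prime, (1 : ℝ) / (q : ℝ) ^ 2 ≤ ε / z := by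
  have h1 : ∀ᶠ x : ℝ in atTop, (Nat.primeCounting ⌊x⌋₊ : ℝ) ≤ ε / 2 * x := by
    have hl : ∀ᶠ x : ℝ in atTop, (Real.log 4 + 1) / (ε / 2) ≤ Real.log x :=
      Real.tendsto_log_atTop.eventually_ge_atTop _
    filter_upwards [Chebyshev.eventually_primeCounting_le one_pos, hl, eventually_gt_atTop 1]
      with x hx hlx hx1
    refine hx.trans ?_
    have : 0 < Real.log x := Real.log_pos hx1
    rw [div_le_iff₀ (by positivity)] at hlx
    rw [div_le_iff₀ this]
    nlinarith
  obtain ⟨x0, hx0⟩ := eventually_atTop.1 h1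
  refine ⟨⌈x0⌉₊ + 1, by omega, fun z hz M => ?_⟩
  have hz1 : 1 ≤ z := by omega
  have hpi : ∀ n : ℕ, z ≤ n → (Nat.primeCounting n : ℝ) ≤ ε / 2 * n := by
    intro n hn
    have := hx0 n ((Nat.le_ceil x0).trans (by exact_mod_cast (by omega : ⌈x0⌉₊ ≤ n)))
    simpa using this
  rcases Nat.lt_or_ge M z with hM | hM
  · rw [Finset.Ioc_eq_empty (by omega)]
    simp
    positivity
  have hind : ∑ q ∈ (Finset.Ioc z M).filter Nat.Prime, (1 : ℝ) / (q : ℝ) ^ 2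
      ≤ (Nat.primeCounting M : ℝ) / (M : ℝ) ^ 2 + ε * (1 / z - 1 / M) := by
    induction M, hM using Nat.le_induction with
    | base => simp; positivity
    | succ n hn ih =>
      have hn1 : 1 ≤ n := by omega
      have hnpos : (0 : ℝ) < n := by exact_mod_cast hn1
      rw [← Finset.insert_Ioc_right_eq_Ioc_add_one hn, Finset.filter_insert]
      have hpc : (Nat.primeCounting (n+1) : ℝ) = Nat.primeCounting n + if (n+1).Prime then 1 else 0 := by
        rw [Nat.primeCounting, Nat.primeCounting', Nat.count_succ, Nat.primeCounting, Nat.primeCounting']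
        push_cast
        rfl
      have hstep : (Nat.primeCounting n : ℝ) / (n : ℝ) ^ 2 + ε * (1 / z - 1 / n) ≤
          (Nat.primeCounting n : ℝ) / ((n : ℝ)+1) ^ 2 + ε * (1 / z - 1 / ((n:ℝ)+1)) := by
        have e1 : (Nat.primeCounting n : ℝ) / (n : ℝ) ^ 2 - (Nat.primeCounting n : ℝ) / ((n : ℝ)+1) ^ 2
          = Nat.primeCounting n * ((2 * n + 1) / ((n:ℝ)^2 * (n+1)^2)) := by
          field_simp; ring
        have e2 : Nat.primeCounting n * ((2 * n + 1) / ((n:ℝ)^2 * (n+1)^2)) ≤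
            (ε / 2 * n) * ((2 * n + 2) / ((n:ℝ)^2 * (n+1)^2)) := by
          have := hpi n hn
          gcongr
          norm_num
        have e3 : (ε / 2 * n) * ((2 * n + 2) / ((n:ℝ)^2 * (n+1)^2)) = ε * (1 / n - 1 / ((n:ℝ)+1)) := by
          field_simp; ring
        nlinarith
      by_cases hp : (n+1).Prime
      · rw [if_pos hp, Finset.sum_insert (by simp)]
        rw [hpc, if_pos hp]
        push_cast
        rw [add_div]
        linarith
      · rw [if_neg hp, hpc, if_neg hp]
        push_cast
        rw [add_zero]
        linarith
  refine hind.trans ?_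
  have hMpos : (0:ℝ) < M := by exact_mod_cast (by omega : 0 < M)
  have h5 : (Nat.primeCounting M : ℝ) / (M : ℝ) ^ 2 ≤ ε / 2 / M := by
    rw [div_le_div_iff₀ (by positivity) hMpos]
    have := hpi M hM
    nlinarith
  have h6 : ε / 2 / M ≤ ε / M := by gcongr; linarith
  have h7 : ε * (1 / (z:ℝ) - 1 / M) = ε / z - ε / M := by ring
  linarith

open Classical in
/-- admissible elements below N of an arithmetic progression -/
noncomputable def TT (P N c d : ℕ) : Finset ℕ :=
  (Finset.range N).filter (fun a : ℕ => Adm P N (a : ZMod P) ∧ ∃ k, a = c + k * d)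

theorem TT_bound (P N c d : ℕ) [NeZero P] (hd0 : 0 < d) (hd : Nat.Coprime d P) :
    ((TT P N c d).card : ℝ) ≤ ((N : ℝ) / P * (1 / d) + 2) * RR P N := by
  classical
  have hP : 0 < P := Nat.pos_of_ne_zero (NeZero.ne P)
  have h1 : (TT P N c d).card ≤ ((N / d + 1) / P + 1) * RR P N := by
    refine le_trans ?_ (count_upper P N c d (N / d + 1) hd)
    have hsub : TT P N c d ⊆ ((Finset.range (N / d + 1)).filter
        (fun k : ℕ => Adm P N ((c + k * d : ℕ) : ZMod P))).image (fun k => c + k * d) := by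
      intro a ha
      simp only [TT, Finset.mem_filter, Finset.mem_range] at ha
      obtain ⟨haN, hA, k, rfl⟩ := ha
      simp only [Finset.mem_image, Finset.mem_filter, Finset.mem_range]
      refine ⟨k, ⟨?_, hA⟩, rfl⟩
      apply Nat.lt_succ_of_le
      rw [Nat.le_div_iff_mul_le hd0]
      omega
    exact (Finset.card_le_card hsub).trans Finset.card_image_le
  have h2 : ((TT P N c d).card : ℝ) ≤ (((N / d + 1) / P + 1 : ℕ) : ℝ) * RR P N := by
    exact_mod_cast h1
  refine h2.trans ?_
  gcongr
  push_cast
  have hPr : (1 : ℝ) ≤ P := by exact_mod_cast hP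
  have h3 : (((N / d + 1) / P : ℕ) : ℝ) ≤ ((N / d + 1 : ℕ) : ℝ) / P := Nat.cast_div_le
  have h4 : ((N / d : ℕ) : ℝ) ≤ (N : ℝ) / d := Nat.cast_div_le
  have h5 : ((N / d + 1 : ℕ) : ℝ) / P ≤ ((N : ℝ) / d + 1) / P := by
    push_cast
    gcongr
  have h6 : ((N : ℝ) / d + 1) / P = (N : ℝ) / P * (1 / d) + 1 / P := by ring
  have h7 : (1 : ℝ) / P ≤ 1 := by rw [div_le_one (by linarith)]; exact hPr
  linarith

open Classical in
theorem bad_bound (z N P s : ℕ) (Q : Finset ℕ) (σ H : ℝ) [NeZero P]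
    (hP : P = primorial z) (hs : s = Nat.sqrt N) (hPN : P ≤ N)
    (hQ : Q = (Finset.Ioc z s).filter Nat.Prime)
    (hσ : σ = ∑ q ∈ Q, (1 : ℝ) / (q : ℝ) ^ 2)
    (hH : H = ∑ j ∈ Finset.Icc 1 N, (1 : ℝ) / j) :
    (((Finset.range N).filter
      (fun a : ℕ => Adm P N (a : ZMod P) ∧ 0 < a ∧ ¬ IsCyclicNum a)).card : ℝ)
      ≤ RR P N * ((N : ℝ) / P * (σ * (1 + 4 * H)) + 2 * (P + 1) * s) := by
  have hP0 : 0 < P := Nat.pos_of_ne_zero (NeZero.ne P)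
  have hPr : (0 : ℝ) < P := by exact_mod_cast hP0
  have hcop : ∀ q, q.Prime → z < q → Nat.Coprime q P := by
    intro q hq hzq
    rw [hq.coprime_iff_not_dvd, hP, hq.dvd_primorial_iff]
    omega
  have hcopA : ∀ a : ℕ, Adm P N (a : ZMod P) → Nat.Coprime a P := fun a h =>
    (ZMod.isUnit_iff_coprime _ _).1 h.1
  have hbig : ∀ a : ℕ, Adm P N (a : ZMod P) → ∀ l, l.Prime → l ∣ a → z < l := by
    intro a ha l hl hla
    by_contra hlz
    have h1 : l ∣ P := by rw [hP, hl.dvd_primorial_iff]; omega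
    exact hl.one_lt.ne' (Nat.dvd_one.1 ((hcopA a ha) ▸ Nat.dvd_gcd hla h1))
  have hQm : ∀ q, q ∈ Q ↔ z < q ∧ q ≤ s ∧ q.Prime := by
    intro q; rw [hQ, Finset.mem_filter, Finset.mem_Ioc]; tauto
  let TA : ℕ × ℕ → Finset ℕ := fun x =>
    if Nat.Coprime (x.2 * x.1 + 1) P ∧ (x.2 * x.1 + 1) * x.1 * P ≤ N then
      TT P N 0 ((x.2 * x.1 + 1) * x.1) else ∅
  let TB : ℕ × ℕ → Finset ℕ := fun x =>
    if Nat.Coprime x.2 P then TT P N (x.1 * x.2) (x.2 * x.1 ^ 2) else ∅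
  have hcover : (Finset.range N).filter
      (fun a : ℕ => Adm P N (a : ZMod P) ∧ 0 < a ∧ ¬ IsCyclicNum a) ⊆
      Q.biUnion (fun q => TT P N 0 (q ^ 2)) ∪ (Q ×ˢ Finset.Icc 1 N).biUnion TA ∪
        (Q ×ˢ Finset.Icc 1 P).biUnion TB := by
    intro a ha
    simp only [Finset.mem_filter, Finset.mem_range] at ha
    obtain ⟨haN, hA, ha0, hnc⟩ := ha
    obtain ⟨q, hq, hqa, hc⟩ := cyc_conflict ha0 hnc
    have hzq := hbig a hA q hq hqa
    rw [Finset.mem_union, Finset.mem_union]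
    rcases hc with ⟨k, hk⟩ | ⟨p, hp, hpa, hqp⟩
    · left; left
      rw [Finset.mem_biUnion]
      refine ⟨q, ?_, ?_⟩
      · rw [hQm]
        refine ⟨hzq, ?_, hq⟩
        rw [hs, Nat.le_sqrt']
        have := Nat.le_of_dvd ha0 ⟨k, hk⟩
        omega
      · simp only [TT, Finset.mem_filter, Finset.mem_range]
        exact ⟨haN, hA, k, by rw [hk]; ring⟩
    · obtain ⟨j, hj⟩ := hqp
      have hp2 := hp.two_le
      have hj1 : 1 ≤ j := by
        rcases Nat.eq_zero_or_pos j with h | h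
        · subst h; omega
        · exact h
      have hpj : p = j * q + 1 := by
        have : q * j = j * q := mul_comm _ _
        omega
      have hqltp : q < p := by nlinarith
      have hcpq : Nat.Coprime p q := (Nat.coprime_primes hp hq).2 (by omega)
      obtain ⟨b, hb⟩ := hcpq.mul_dvd_of_dvd_of_dvd hpa hqa
      have hb0 : 0 < b := by
        rcases Nat.eq_zero_or_pos b with h | h
        · subst h; omega
        · exact h
      have hpqa : p * q ≤ a := Nat.le_of_dvd ha0 ⟨b, hb⟩
      have hqQ : q ∈ Q := by
        rw [hQm]
        refine ⟨hzq, ?_, hq⟩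
        rw [hs, Nat.le_sqrt']
        nlinarith
      by_cases hcase : p * q * P ≤ N
      · left; right
        rw [Finset.mem_biUnion]
        refine ⟨(q, j), ?_, ?_⟩
        · rw [Finset.mem_product, Finset.mem_Icc]
          refine ⟨hqQ, hj1, ?_⟩
          have := Nat.le_of_dvd ha0 hpa
          have := hq.pos
          show j ≤ N
          nlinarith
        · have hcc : Nat.Coprime (j * q + 1) P ∧ (j * q + 1) * q * P ≤ N := by
            rw [← hpj]
            exact ⟨hcop p hp (by omega), hcase⟩
          simp only [TA]
          rw [if_pos hcc]
          simp only [TT, Finset.mem_filter, Finset.mem_range]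
          refine ⟨haN, hA, b, ?_⟩
          rw [← hpj, hb]; ring
      · right
        rw [Finset.mem_biUnion]
        refine ⟨(q, b), ?_, ?_⟩
        · rw [Finset.mem_product, Finset.mem_Icc]
          refine ⟨hqQ, hb0, ?_⟩
          show b ≤ P
          by_contra hbP
          have : p * q * P ≤ p * q * b := Nat.mul_le_mul_left _ (by omega)
          omega
        · have hcc : Nat.Coprime b P := by
            have := hcopA a hA
            rw [hb] at this
            exact Nat.Coprime.coprime_mul_left this
          simp only [TB]
          rw [if_pos hcc]
          simp only [TT, Finset.mem_filter, Finset.mem_range]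
          refine ⟨haN, hA, j, ?_⟩
          rw [hb, hpj]; ring
  have hR0 : (0 : ℝ) ≤ RR P N := Nat.cast_nonneg _
  have hQs : (Q.card : ℝ) ≤ s := by
    have : Q.card ≤ s := by
      rw [hQ]
      refine (Finset.card_filter_le _ _).trans ?_
      rw [Nat.card_Ioc]; omega
    exact_mod_cast this
  have hb1 : ((Q.biUnion (fun q => TT P N 0 (q ^ 2))).card : ℝ) ≤
      ((N : ℝ) / P * σ + 2 * s) * RR P N := by
    have h1 : ((Q.biUnion (fun q => TT P N 0 (q ^ 2))).card : ℝ) ≤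
        ∑ q ∈ Q, ((TT P N 0 (q ^ 2)).card : ℝ) := by exact_mod_cast Finset.card_biUnion_le
    have h2 : ∑ q ∈ Q, ((TT P N 0 (q ^ 2)).card : ℝ) ≤
        ∑ q ∈ Q, ((N : ℝ) / P * (1 / (q : ℝ) ^ 2) + 2) * RR P N := by
      apply Finset.sum_le_sum
      intro q hq
      rw [hQm] at hq
      have := TT_bound P N 0 (q ^ 2) (pow_pos hq.2.2.pos 2) ((hcop q hq.2.2 hq.1).pow_left 2)
      push_cast at this
      exact this
    rw [← Finset.sum_mul, Finset.sum_add_distrib, ← Finset.mul_sum, ← hσ, Finset.sum_const,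
      nsmul_eq_mul] at h2
    refine (h1.trans h2).trans ?_
    gcongr ?_ * _
    linarith
  have hb2 : (((Q ×ˢ Finset.Icc 1 N).biUnion TA).card : ℝ) ≤
      ((N : ℝ) / P * (3 * (σ * H))) * RR P N := by
    have h1 : (((Q ×ˢ Finset.Icc 1 N).biUnion TA).card : ℝ) ≤
        ∑ x ∈ Q ×ˢ Finset.Icc 1 N, ((TA x).card : ℝ) := by exact_mod_cast Finset.card_biUnion_le
    have h2 : ∑ x ∈ Q ×ˢ Finset.Icc 1 N, ((TA x).card : ℝ) ≤
        ∑ x ∈ Q ×ˢ Finset.Icc 1 N,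
          ((N : ℝ) / P * 3 * RR P N) * ((1 / (x.1 : ℝ) ^ 2) * (1 / (x.2 : ℝ))) := by
      apply Finset.sum_le_sum
      rintro ⟨q, j⟩ hx
      rw [Finset.mem_product, Finset.mem_Icc, hQm] at hx
      obtain ⟨⟨hzq, -, hq⟩, hj1, -⟩ := hx
      simp only at hzq hq hj1
      have hq0 : (0 : ℝ) < q := by exact_mod_cast hq.pos
      have hj0 : (0 : ℝ) < j := by exact_mod_cast hj1
      simp only [TA]
      split_ifs with hcc
      · have hd0 : 0 < (j * q + 1) * q := Nat.mul_pos (Nat.succ_pos _) hq.pos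
        have h := TT_bound P N 0 ((j * q + 1) * q) hd0
          (Nat.Coprime.mul_left hcc.1 (hcop q hq hzq))
        refine h.trans ?_
        have hle : (1 : ℝ) ≤ (N : ℝ) / P * (1 / (((j * q + 1) * q : ℕ) : ℝ)) := by
          have hd0r : (0 : ℝ) < (((j * q + 1) * q : ℕ) : ℝ) := by exact_mod_cast hd0
          rw [div_mul_div_comm, mul_one, le_div_iff₀ (by positivity), one_mul, mul_comm]
          exact_mod_cast hcc.2
        have hle2 : (1 / (((j * q + 1) * q : ℕ) : ℝ)) ≤ (1 / (q : ℝ) ^ 2) * (1 / (j : ℝ)) := by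
          rw [div_mul_div_comm, mul_one]
          apply one_div_le_one_div_of_le (by positivity)
          push_cast
          nlinarith
        have hle3 : (N : ℝ) / P * (1 / (((j * q + 1) * q : ℕ) : ℝ)) ≤
            (N : ℝ) / P * ((1 / (q : ℝ) ^ 2) * (1 / (j : ℝ))) := by gcongr
        calc _ ≤ (3 * ((N : ℝ) / P * ((1 / (q : ℝ) ^ 2) * (1 / (j : ℝ))))) * RR P N := by
              gcongr ?_ * _
              linarith
          _ = _ := by ring
      · simp only [Finset.card_empty, Nat.cast_zero]
        positivity
    rw [← Finset.mul_sum, Finset.sum_product' (f := fun (a b : ℕ) => (1 / (a : ℝ) ^ 2) * (1 / (b : ℝ))),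
      ← Finset.sum_mul_sum, ← hσ, ← hH] at h2
    refine (h1.trans h2).trans (le_of_eq ?_)
    ring
  have hσ0 : 0 ≤ σ := by rw [hσ]; positivity
  have hb3 : (((Q ×ˢ Finset.Icc 1 P).biUnion TB).card : ℝ) ≤
      ((N : ℝ) / P * (σ * H) + 2 * (s * P)) * RR P N := by
    have h1 : (((Q ×ˢ Finset.Icc 1 P).biUnion TB).card : ℝ) ≤
        ∑ x ∈ Q ×ˢ Finset.Icc 1 P, ((TB x).card : ℝ) := by exact_mod_cast Finset.card_biUnion_le
    have h2 : ∑ x ∈ Q ×ˢ Finset.Icc 1 P, ((TB x).card : ℝ) ≤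
        ∑ x ∈ Q ×ˢ Finset.Icc 1 P,
          ((N : ℝ) / P * ((1 / (x.1 : ℝ) ^ 2) * (1 / (x.2 : ℝ))) + 2) * RR P N := by
      apply Finset.sum_le_sum
      rintro ⟨q, b⟩ hx
      rw [Finset.mem_product, Finset.mem_Icc, hQm] at hx
      obtain ⟨⟨hzq, -, hq⟩, hb1, -⟩ := hx
      simp only at hzq hq hb1
      simp only [TB]
      split_ifs with hcc
      · have hd0 : 0 < b * q ^ 2 := Nat.mul_pos hb1 (pow_pos hq.pos 2)
        have h := TT_bound P N (q * b) (b * q ^ 2) hd0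
          (Nat.Coprime.mul_left hcc ((hcop q hq hzq).pow_left 2))
        refine h.trans (le_of_eq ?_)
        push_cast
        rw [div_mul_div_comm 1 _ 1, mul_one, mul_comm (b : ℝ)]
      · simp only [Finset.card_empty, Nat.cast_zero]
        positivity
    rw [← Finset.sum_mul, Finset.sum_add_distrib, ← Finset.mul_sum,
      Finset.sum_product' (f := fun (a b : ℕ) => (1 / (a : ℝ) ^ 2) * (1 / (b : ℝ))),
      ← Finset.sum_mul_sum, ← hσ, Finset.sum_const, nsmul_eq_mul, Finset.card_product,
      Nat.card_Icc, Nat.add_sub_cancel] at h2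
    refine (h1.trans h2).trans ?_
    have hHP : ∑ j ∈ Finset.Icc 1 P, (1 : ℝ) / j ≤ H := by
      rw [hH]
      apply Finset.sum_le_sum_of_subset_of_nonneg
      · exact Finset.Icc_subset_Icc_right hPN
      · intros; positivity
    gcongr ?_ * _
    push_cast
    have : (Q.card : ℝ) * P ≤ s * P := by gcongr
    have : (N : ℝ) / P * (σ * ∑ j ∈ Finset.Icc 1 P, (1 : ℝ) / j) ≤ (N : ℝ) / P * (σ * H) := by
      gcongr
    linarith
  have hfin := Finset.card_le_card hcover
  have hu := (hfin.trans (Finset.card_union_le _ _)).trans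
    (Nat.add_le_add_right (Finset.card_union_le _ _) _)
  have hu' : (((Finset.range N).filter
      (fun a : ℕ => Adm P N (a : ZMod P) ∧ 0 < a ∧ ¬ IsCyclicNum a)).card : ℝ) ≤
      ((Q.biUnion (fun q => TT P N 0 (q ^ 2))).card : ℝ) +
      (((Q ×ˢ Finset.Icc 1 N).biUnion TA).card : ℝ) +
      (((Q ×ˢ Finset.Icc 1 P).biUnion TB).card : ℝ) := by exact_mod_cast hu
  refine hu'.trans ((add_le_add (add_le_add hb1 hb2) hb3).trans (le_of_eq ?_))
  ring

theorem even_eq_add_two_cyclics_of_large :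
    ∃ N : ℕ, ∀ n : ℕ, N ≤ n → Even n →
      ∃ a b : ℕ, IsCyclicNum a ∧ IsCyclicNum b ∧ a + b = n := by
  classical
  obtain ⟨z0, hz01, hz0⟩ := prime_sq_sum (1 / 400) (by norm_num)
  refine ⟨4 ^ (8 * (z0 + 2)), fun n hn hev => ?_⟩
  have hn0 : n ≠ 0 := by
    have : 0 < 4 ^ (8 * (z0 + 2)) := by positivity
    omega
  obtain ⟨z, hz⟩ : ∃ z, z = Nat.log 4 n / 8 := ⟨_, rfl⟩
  have hlog : 8 * (z0 + 2) ≤ Nat.log 4 n := Nat.le_log_of_pow_le (by norm_num) hn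
  have hzz : z0 + 2 ≤ z := by omega
  have hlow : 4 ^ (8 * z) ≤ n := Nat.pow_le_of_le_log hn0 (by omega)
  have hup : n < 4 ^ (8 * z + 8) := Nat.lt_pow_of_log_lt (by norm_num) (by omega)
  obtain ⟨P, hP⟩ : ∃ P, P = primorial z := ⟨_, rfl⟩
  have hP0 : 0 < P := hP ▸ primorial_pos z
  have hP4 : P ≤ 4 ^ z := hP ▸ primorial_le_four_pow z
  haveI : NeZero P := ⟨hP0.ne'⟩
  obtain ⟨s, hs⟩ : ∃ s, s = Nat.sqrt n := ⟨_, rfl⟩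
  have hs4 : 4 ^ (4 * z) ≤ s := by
    rw [hs, Nat.le_sqrt', ← pow_mul]
    convert hlow using 2; ring
  have hsn : s * s ≤ n := hs ▸ Nat.sqrt_le n
  have hsP : 18 * P ^ 2 ≤ s := by
    have h1 : P ^ 2 ≤ (4 ^ z) ^ 2 := Nat.pow_le_pow_left hP4 2
    have h2 : 18 ≤ (4 ^ z) ^ 2 := by
      have : 4 ^ 2 ≤ 4 ^ z := Nat.pow_le_pow_right (by norm_num) (by omega)
      nlinarith
    have h3 : 4 ^ (4 * z) = (4 ^ z) ^ 2 * (4 ^ z) ^ 2 := by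
      rw [← pow_mul, ← pow_add]; congr 1; ring
    calc 18 * P ^ 2 ≤ (4 ^ z) ^ 2 * (4 ^ z) ^ 2 := Nat.mul_le_mul h2 h1
      _ ≤ s := h3 ▸ hs4
  have hPs : P ≤ s := by nlinarith
  have hPn : P ≤ n := by nlinarith
  set σ : ℝ := ∑ q ∈ (Finset.Ioc z s).filter Nat.Prime, (1 : ℝ) / (q : ℝ) ^ 2 with hσ
  set H : ℝ := ∑ j ∈ Finset.Icc 1 n, (1 : ℝ) / j with hH
  have hbad := bad_bound z n P s _ σ H hP hs hPn rfl hσ hH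
  have hlower := count_lower P n
  have hR : 0 < RR P n := by subst hP; exact RR_pos z n hev
  set R := RR P n with hRdef
  set B := (Finset.range n).filter
      (fun a : ℕ => Adm P n (a : ZMod P) ∧ 0 < a ∧ ¬ IsCyclicNum a) with hB
  set G := (Finset.range n).filter (fun k : ℕ => Adm P n (k : ZMod P)) with hG
  -- numerics
  have hzr : (1 : ℝ) ≤ z := by exact_mod_cast (by omega : 1 ≤ z)
  have hσz : σ ≤ (1 / 400) / z := hz0 z (by omega) s
  have hHle : H ≤ 1 + (8 * z + 8) * 1.4 := by
    have h1 : H = ((harmonic n : ℚ) : ℝ) := by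
      rw [hH, harmonic_eq_sum_Icc]; push_cast
      simp only [one_div]
    have h2 : Real.log n ≤ (8 * z + 8) * Real.log 4 := by
      have : Real.log n ≤ Real.log ((4 : ℝ) ^ (8 * z + 8)) := by
        apply Real.log_le_log (by exact_mod_cast Nat.pos_of_ne_zero hn0)
        exact_mod_cast hup.le
      rw [Real.log_pow] at this
      exact_mod_cast this
    have h3 : Real.log 4 ≤ 1.4 := by
      have : (4 : ℝ) = 2 ^ 2 := by norm_num
      rw [this, Real.log_pow]
      have := Real.log_two_lt_d9
      push_cast
      linarith
    rw [h1]
    refine (harmonic_le_one_add_log n).trans ?_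
    have : (8 * (z : ℝ) + 8) * Real.log 4 ≤ (8 * z + 8) * 1.4 := by gcongr
    linarith
  have hH0 : 0 ≤ H := by positivity
  have hσH : σ * (1 + 4 * H) ≤ 1 / 4 := by
    calc σ * (1 + 4 * H) ≤ ((1 / 400) / z) * (100 * z) := by
          gcongr
          linarith
      _ = 1 / 4 := by field_simp; norm_num
  have hPr : (1 : ℝ) ≤ P := by exact_mod_cast hP0
  have hPr0 : (0 : ℝ) < P := by linarith
  have hsr : 18 * (P : ℝ) ^ 2 ≤ s := by exact_mod_cast hsP
  have hs1 : (1 : ℝ) ≤ s := by nlinarith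
  have hsnr : (s : ℝ) * s ≤ n := by exact_mod_cast hsn
  have hnum : 4 * ((P : ℝ) + 1) * s + 1 ≤ (n : ℝ) / P / 2 := by
    rw [div_div, le_div_iff₀ (by positivity)]
    have h1 : 4 * ((P : ℝ) + 1) * s + 1 ≤ 9 * (P * s) := by nlinarith
    calc (4 * ((P : ℝ) + 1) * s + 1) * (P * 2) ≤ 9 * (P * s) * (P * 2) := by gcongr
      _ = (18 * (P : ℝ) ^ 2) * s := by ring
      _ ≤ s * s := by gcongr
      _ ≤ n := hsnr
  have hfloor : (n : ℝ) / P < ((n / P : ℕ) : ℝ) + 1 := by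
    rw [div_lt_iff₀ hPr0]
    exact_mod_cast Nat.lt_mul_of_div_lt (Nat.lt_succ_self _) hP0
  have hRr : (0 : ℝ) < R := by exact_mod_cast hR
  have hlt : 2 * B.card < G.card := by
    have h1 : ((n / P : ℕ) : ℝ) * R ≤ G.card := by exact_mod_cast hlower
    have h2 : (2 : ℝ) * B.card < G.card := by
      refine lt_of_lt_of_le ?_ h1
      have h3 : (n : ℝ) / P * (σ * (1 + 4 * H)) ≤ (n : ℝ) / P * (1 / 4) := by gcongr
      have h4 : 2 * ((n : ℝ) / P * (σ * (1 + 4 * H)) + 2 * (P + 1) * s) < ((n / P : ℕ) : ℝ) := by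
        linarith
      nlinarith
    exact_mod_cast h2
  -- the reflected bad set
  set B' := B.image (fun a => n - a) with hB'
  have hB'c : B'.card ≤ B.card := Finset.card_image_le
  have hne : (G \ (B ∪ B')).Nonempty := by
    rw [← Finset.card_pos]
    have h1 := Finset.le_card_sdiff (B ∪ B') G
    have h2 := Finset.card_union_le B B'
    omega
  obtain ⟨a, ha⟩ := hne
  rw [Finset.mem_sdiff, Finset.mem_union, not_or] at ha
  obtain ⟨haG, haB, haB'⟩ := ha
  rw [hG, Finset.mem_filter, Finset.mem_range] at haG
  obtain ⟨han, hA⟩ := haG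
  have hP2 : 1 < P := by
    have := (Nat.prime_two.dvd_primorial_iff (n := z)).2 (by omega)
    rw [← hP] at this
    exact Nat.le_of_dvd hP0 this
  have ha0 : 0 < a := by
    rcases Nat.eq_zero_or_pos a with h | h
    · subst h
      have := (ZMod.isUnit_iff_coprime _ _).1 hA.1
      rw [Nat.coprime_zero_left] at this
      omega
    · exact h
  have hc1 : IsCyclicNum a := by
    by_contra hc
    exact haB (by rw [hB, Finset.mem_filter, Finset.mem_range]; exact ⟨han, hA, ha0, hc⟩)
  have hc2 : IsCyclicNum (n - a) := by
    by_contra hc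
    apply haB'
    rw [hB', Finset.mem_image]
    refine ⟨n - a, ?_, by omega⟩
    rw [hB, Finset.mem_filter, Finset.mem_range]
    refine ⟨by omega, ?_, by omega, hc⟩
    rw [Adm, Nat.cast_sub han.le]
    exact ⟨hA.2, by rw [sub_sub_cancel]; exact hA.1⟩
  exact ⟨a, n - a, hc1, hc2, by omega⟩
end

section
/- There are infinitely many cyclic numbers c such that c + 2 is also cyclic. -/
open Filter Asymptotics Real

open Finset in
lemma tw_card_cong (T d : ℕ) (hd : 0 < d) (A : Finset ℕ) (hA : ∀ s ∈ A, s < T)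
    (h : ∀ s ∈ A, ∀ s' ∈ A, s ≡ s' [MOD d]) : A.card ≤ T / d + 1 := by
  have := Finset.card_le_card_of_injOn (s := A) (t := Finset.range (T / d + 1)) (fun s => s / d)
    (by
      intro s hs
      have h1 : s / d ≤ T / d := Nat.div_le_div_right (hA s hs).le
      simp only [Finset.coe_range, Set.mem_Iio]
      omega)
    (by
      intro s hs s' hs' e
      have h1 : s % d = s' % d := h s hs s' hs'
      have h2 : s / d = s' / d := e
      rw [← Nat.div_add_mod s d, ← Nat.div_add_mod s' d, h1, h2])
  simpa using this

lemma tw_cntA (P r T d a : ℕ) (hd : 0 < d) (hdT : d ≤ T)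
    (h : ∀ s, P * s + r ≡ a [MOD d] → Nat.Coprime d P) (q : ℕ → Prop) [DecidablePred q]
    (hq : ∀ s, q s → P * s + r ≡ a [MOD d]) :
    (((Finset.range T).filter q).card : ℝ) ≤ 2 * T / d := by
  have h1 : ((Finset.range T).filter q).card ≤ T / d + 1 := by
    apply tw_card_cong T d hd
    · intro s hs
      simp at hs
      exact hs.1
    · intro s hs s' hs'
      simp only [Finset.mem_filter] at hs hs'
      have e1 := hq _ hs.2
      have e2 := hq _ hs'.2
      have e3 := Nat.ModEq.add_right_cancel' r (e1.trans e2.symm)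
      exact Nat.ModEq.cancel_left_of_coprime (h s e1) e3
  have h2 : (((Finset.range T).filter q).card : ℝ) ≤ ((T / d : ℕ) : ℝ) + 1 := by exact_mod_cast h1
  have h3 : ((T / d : ℕ) : ℝ) ≤ (T : ℝ) / d := Nat.cast_div_le
  have hd' : (0 : ℝ) < d := by exact_mod_cast hd
  have h4 : (1 : ℝ) ≤ (T : ℝ) / d := by
    rw [le_div_iff₀ hd']
    have : (d : ℝ) ≤ T := by exact_mod_cast hdT
    linarith
  have : 2 * (T : ℝ) / d = T / d + T / d := by ring
  linarith

lemma tw_cntB (P r T d : ℕ) (hP : 0 < P) (hr : 0 < r) (hrP : r ≤ P + 1) (hd : 0 < d) :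
    (((Finset.range T).filter (fun s => d ∣ P * s + r)).card : ℝ) ≤ ((P * T + 1 : ℕ) : ℝ) / d := by
  have h1 : ((Finset.range T).filter (fun s => d ∣ P * s + r)).card ≤ (P * T + 1) / d := by
    have := Finset.card_le_card_of_injOn (s := (Finset.range T).filter (fun s => d ∣ P * s + r))
      (t := Finset.Icc 1 ((P * T + 1) / d)) (fun s => (P * s + r) / d)
      (by
        intro s hs
        simp only [Finset.coe_filter, Finset.mem_range, Set.mem_ofPred_eq] at hs
        obtain ⟨hs, k, hk⟩ := hs
        simp only [Finset.coe_Icc, Set.mem_Icc]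
        constructor
        · rw [hk, Nat.mul_div_cancel_left _ hd]
          rcases Nat.eq_zero_or_pos k with h | h
          · subst h; omega
          · exact h
        · apply Nat.div_le_div_right
          have : P * (s + 1) ≤ P * T := Nat.mul_le_mul_left _ hs
          rw [Nat.mul_add] at this
          omega)
      (by
        intro s hs s' hs' e
        simp only [Finset.coe_filter, Finset.mem_range, Set.mem_ofPred_eq] at hs hs'
        have h2 := (Nat.div_left_inj hs.2 hs'.2).1 e
        exact Nat.eq_of_mul_eq_mul_left hP (by omega))
    simpa using this
  calc _ ≤ (((P * T + 1) / d : ℕ) : ℝ) := by exact_mod_cast h1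
    _ ≤ _ := Nat.cast_div_le

lemma tw_totient (n : ℕ) (hn : 0 < n) (h : ¬ IsCyclicNum n) :
    ∃ p, p.Prime ∧ p ∣ n ∧ (p ^ 2 ∣ n ∨ ∃ k, 1 ≤ k ∧ p * (k * p + 1) ∣ n) := by
  have h1 : Nat.gcd n (Nat.totient n) ≠ 1 := fun e => h ⟨hn, e⟩
  obtain ⟨p, hp, hd⟩ := Nat.exists_prime_and_dvd h1
  have hpn := hd.trans (Nat.gcd_dvd_left _ _)
  have hpt := hd.trans (Nat.gcd_dvd_right _ _)
  refine ⟨p, hp, hpn, ?_⟩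
  rw [Nat.totient_eq_prod_factorization hn.ne', Finsupp.prod, hp.prime.dvd_finsetProd_iff] at hpt
  obtain ⟨q, hq, hpq⟩ := hpt
  have hq' : q ∈ n.primeFactors := by simpa using hq
  have hqp := Nat.prime_of_mem_primeFactors hq'
  have hqn := Nat.dvd_of_mem_primeFactors hq'
  rcases (hp.dvd_mul).1 hpq with h2 | h2
  · left
    have hpq' := (Nat.prime_dvd_prime_iff_eq hp hqp).1 (hp.dvd_of_dvd_pow h2)
    subst hpq'
    rw [hp.pow_dvd_iff_le_factorization hn.ne']
    by_contra hlt
    have : n.factorization p - 1 = 0 := by omega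
    rw [this, pow_zero] at h2
    exact hp.one_lt.ne' (Nat.dvd_one.1 h2)
  · right
    obtain ⟨k, hk⟩ := h2
    have hq2 := hqp.two_le
    have e : q = k * p + 1 := by rw [mul_comm k p]; omega
    refine ⟨k, ?_, ?_⟩
    · rcases Nat.eq_zero_or_pos k with h | h
      · subst h; omega
      · exact h
    · rw [← e]
      apply Nat.Coprime.mul_dvd_of_dvd_of_dvd _ hpn hqn
      rw [Nat.coprime_primes hp hqp]
      rintro rfl
      have : p ∣ p - 1 := ⟨k, hk⟩
      have := Nat.le_of_dvd (by omega) this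
      omega

lemma tw_primesum (y : ℕ) (hy : 1 ≤ y) (z : ℕ) (hz : y ≤ z) :
    ∑ p ∈ (Finset.Ioc y z).filter Nat.Prime, Real.log p / (p : ℝ) ^ 2 ≤ 2 * Real.log 4 / y := by
  have key : ∑ p ∈ (Finset.Ioc y z).filter Nat.Prime, Real.log p / (p : ℝ) ^ 2
      ≤ Chebyshev.theta z / (z : ℝ) ^ 2 + 2 * Real.log 4 * (1 / (y : ℝ) - 1 / z) := by
    induction z, hz using Nat.le_induction with
    | base =>
      simp
      exact div_nonneg (Chebyshev.theta_nonneg _) (by positivity)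
    | succ z hz ih =>
      have hz0 : (0 : ℝ) < z := by exact_mod_cast (by omega : 0 < z)
      have hth : Chebyshev.theta z ≤ Real.log 4 * z := Chebyshev.theta_le_log4_mul_x hz0.le
      have hstep : Chebyshev.theta ((z + 1 : ℕ) : ℝ)
          = Chebyshev.theta z + if (z + 1).Prime then Real.log ((z + 1 : ℕ) : ℝ) else 0 := by
        rw [Chebyshev.theta_eq_sum_Icc, Chebyshev.theta_eq_sum_Icc, Nat.floor_natCast,
          Nat.floor_natCast, Finset.sum_filter, Finset.sum_filter,
          Finset.sum_Icc_succ_top (by omega)]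
      have hsum : ∑ p ∈ (Finset.Ioc y (z + 1)).filter Nat.Prime, Real.log p / (p : ℝ) ^ 2
          = ∑ p ∈ (Finset.Ioc y z).filter Nat.Prime, Real.log p / (p : ℝ) ^ 2
          + (if (z + 1).Prime then Real.log ((z + 1 : ℕ) : ℝ) else 0) / ((z + 1 : ℕ) : ℝ) ^ 2 := by
        rw [Finset.sum_filter, Finset.sum_filter, Finset.sum_Ioc_succ_top hz]
        congr 1
        split_ifs <;> simp
      rw [hsum, hstep]
      set w := (if (z + 1).Prime then Real.log ((z + 1 : ℕ) : ℝ) else 0)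
      have h4 : (0 : ℝ) ≤ Real.log 4 := Real.log_nonneg (by norm_num)
      have e2 : Chebyshev.theta z * (1 / (z : ℝ) ^ 2 - 1 / ((z : ℝ) + 1) ^ 2)
          ≤ 2 * Real.log 4 * (1 / (z : ℝ) - 1 / ((z : ℝ) + 1)) := by
        have p1 : 1 / (z : ℝ) ^ 2 - 1 / ((z : ℝ) + 1) ^ 2
            = (2 * z + 1) / ((z : ℝ) ^ 2 * ((z : ℝ) + 1) ^ 2) := by field_simp; ring
        have p2 : 1 / (z : ℝ) - 1 / ((z : ℝ) + 1) = 1 / ((z : ℝ) * (z + 1)) := by field_simp; ring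
        rw [p1, p2]
        calc _ ≤ (Real.log 4 * z) * ((2 * z + 1) / ((z : ℝ) ^ 2 * ((z : ℝ) + 1) ^ 2)) := by
              gcongr
          _ ≤ (Real.log 4 * z) * ((2 * (z + 1)) / ((z : ℝ) ^ 2 * ((z : ℝ) + 1) ^ 2)) := by
              gcongr; linarith
          _ = _ := by field_simp
      push_cast
      have e3 : Chebyshev.theta z * (1 / (z : ℝ) ^ 2 - 1 / ((z : ℝ) + 1) ^ 2)
        = Chebyshev.theta z / (z : ℝ) ^ 2 - Chebyshev.theta z / ((z : ℝ) + 1) ^ 2 := by ring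
      have e4 : (Chebyshev.theta z + w) / ((z : ℝ) + 1) ^ 2 =
        Chebyshev.theta z / ((z : ℝ) + 1) ^ 2 + w / ((z : ℝ) + 1) ^ 2 := by ring
      rw [e4]
      linarith
  have hz0 : (0 : ℝ) < z := by exact_mod_cast (by omega : 0 < z)
  have hth : Chebyshev.theta z ≤ Real.log 4 * z := Chebyshev.theta_le_log4_mul_x hz0.le
  have h5 : Chebyshev.theta z / (z : ℝ) ^ 2 ≤ Real.log 4 / z := by
    rw [div_le_div_iff₀ (by positivity) hz0]
    nlinarith
  have h4 : (0 : ℝ) ≤ Real.log 4 / z := div_nonneg (Real.log_nonneg (by norm_num)) hz0.le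
  have : 2 * Real.log 4 * (1 / (y : ℝ) - 1 / z) = 2 * Real.log 4 / y - 2 * (Real.log 4 / z) := by
    ring
  linarith

lemma tw_den (p k : ℝ) (hp : 0 ≤ p) : p ^ 2 * k ≤ p * (k * p + 1) := by
  have : p * (k * p + 1) = p ^ 2 * k + p := by ring
  linarith

lemma tw_kle (p k : ℕ) (hp : 0 < p) : k ≤ p * (k * p + 1) :=
  calc k ≤ k * p := Nat.le_mul_of_pos_right _ hp
    _ ≤ k * p + 1 := Nat.le_succ _
    _ ≤ _ := Nat.le_mul_of_pos_left _ hp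

lemma tw_biUnion {ι : Type*} [DecidableEq ι] (I : Finset ι) (f : ι → Finset ℕ) (g : ι → ℝ)
    (h : ∀ i ∈ I, ((f i).card : ℝ) ≤ g i) : ((I.biUnion f).card : ℝ) ≤ ∑ i ∈ I, g i := by
  calc ((I.biUnion f).card : ℝ) ≤ ((∑ i ∈ I, (f i).card : ℕ) : ℝ) := by
        exact_mod_cast Finset.card_biUnion_le
    _ = ∑ i ∈ I, ((f i).card : ℝ) := by push_cast; rfl
    _ ≤ _ := Finset.sum_le_sum h

lemma tw_harm (n : ℕ) : ∑ k ∈ Finset.Icc 1 n, ((k : ℝ))⁻¹ ≤ 1 + Real.log n := by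
  have := harmonic_le_one_add_log n
  rw [harmonic_eq_sum_Icc] at this
  push_cast at this
  exact this

lemma tw_prod (I K : Finset ℕ) (C : ℝ) :
    ∑ i ∈ I ×ˢ K, C * (((i.1 : ℝ) ^ 2)⁻¹ * (i.2 : ℝ)⁻¹)
      = C * ((∑ p ∈ I, ((p : ℝ) ^ 2)⁻¹) * ∑ k ∈ K, (k : ℝ)⁻¹) := by
  rw [← Finset.mul_sum, Finset.sum_mul_sum, Finset.sum_product]

set_option maxHeartbeats 2000000 in
lemma tw_bad (y P r T z : ℕ) (hP : 0 < P) (hr : 0 < r) (hrP : r ≤ P + 1)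
    (hc : Nat.Coprime r P) (hPy : ∀ p, p.Prime → p ≤ y → p ∣ P) (hz : 0 < z)
    (hT : P * z ^ 2 ≤ T) (S : ℝ)
    (hS : S = ∑ p ∈ (Finset.Ioc y z).filter Nat.Prime, ((p : ℝ) ^ 2)⁻¹) :
    (((Finset.range T).filter (fun s => ¬ IsCyclicNum (P * s + r))).card : ℝ) ≤
      2 * T * S * (1 + (1 + Real.log T) + (1 + Real.log P))
        + ((P * T + 1 : ℕ) : ℝ) * (1 + (1 + Real.log ((P * T + 1 : ℕ) : ℝ))) / z := by
  set X := P * T + 1 with hX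
  set Q := (Finset.Ioc y z).filter Nat.Prime with hQ
  set R := Finset.Ioc z X with hR
  have hS0 : 0 ≤ S := by rw [hS]; exact Finset.sum_nonneg (fun _ _ => by positivity)
  have hcop : ∀ s d, d ∣ P * s + r → Nat.Coprime d P := by
    intro s d hd
    have : Nat.Coprime (P * s + r) P := by
      rw [Nat.coprime_mul_left_add_left]; exact hc
    exact Nat.Coprime.coprime_dvd_left hd this
  have hRs : ∑ p ∈ R, ((p : ℝ) ^ 2)⁻¹ ≤ (z : ℝ)⁻¹ := by
    rcases le_or_gt z X with h | h
    · have := sum_Ioc_inv_sq_le_sub (α := ℝ) hz.ne' h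
      have h2 : (0 : ℝ) ≤ (X : ℝ)⁻¹ := by positivity
      linarith
    · rw [hR, Finset.Ioc_eq_empty (by omega)]
      simp
  have hQp : ∀ p ∈ Q, 0 < p ∧ p ≤ z := by
    intro p hp
    simp only [hQ, Finset.mem_filter, Finset.mem_Ioc] at hp
    exact ⟨hp.2.pos, hp.1.2⟩
  have hRp : ∀ p ∈ R, 0 < p := by
    intro p hp
    simp only [hR, Finset.mem_Ioc] at hp
    omega
  set A1 := Q.biUnion (fun p => (Finset.range T).filter (fun s => p ^ 2 ∣ P * s + r)) with hA1
  set B1 := (Q ×ˢ Finset.Icc 1 T).biUnion (fun i => (Finset.range T).filter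
    (fun s => i.1 * (i.2 * i.1 + 1) ≤ T ∧ i.1 * (i.2 * i.1 + 1) ∣ P * s + r)) with hB1
  set B2 := (Q ×ˢ Finset.Icc 1 P).biUnion (fun i => (Finset.range T).filter
    (fun s => P * s + r ≡ i.2 * i.1 [MOD i.2 * i.1 ^ 2])) with hB2
  set A3 := R.biUnion (fun p => (Finset.range T).filter (fun s => p ^ 2 ∣ P * s + r)) with hA3
  set B3 := (R ×ˢ Finset.Icc 1 X).biUnion (fun i => (Finset.range T).filter
    (fun s => i.1 * (i.2 * i.1 + 1) ∣ P * s + r)) with hB3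
  have cA1 : (A1.card : ℝ) ≤ 2 * T * S := by
    refine (tw_biUnion _ _ (fun p : ℕ => 2 * (T : ℝ) * ((p : ℝ) ^ 2)⁻¹) ?_).trans ?_
    · intro p hp
      obtain ⟨h0, h1⟩ := hQp p hp
      have := tw_cntA P r T (p ^ 2) 0 (by positivity)
        (by
          calc p ^ 2 ≤ z ^ 2 := Nat.pow_le_pow_left h1 2
            _ ≤ P * z ^ 2 := Nat.le_mul_of_pos_left _ hP
            _ ≤ T := hT)
        (fun s hs => hcop s _ ((Nat.modEq_zero_iff_dvd).1 hs))
        (fun s => p ^ 2 ∣ P * s + r) (fun s hs => (Nat.modEq_zero_iff_dvd).2 hs)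
      push_cast at this
      rw [← div_eq_mul_inv]
      exact this
    · rw [← Finset.mul_sum, hS]
  have cB1 : (B1.card : ℝ) ≤ 2 * T * S * (1 + Real.log T) := by
    refine (tw_biUnion _ _ (fun i => (2 * T) * (((i.1 : ℝ) ^ 2)⁻¹ * (i.2 : ℝ)⁻¹)) ?_).trans ?_
    · rintro ⟨p, k⟩ hpk
      simp only [Finset.mem_product, Finset.mem_Icc] at hpk
      obtain ⟨h0, h1⟩ := hQp p hpk.1
      have hk0 : 0 < k := hpk.2.1
      by_cases hle : p * (k * p + 1) ≤ T
      · have := tw_cntA P r T (p * (k * p + 1)) 0 (by positivity) hle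
          (fun s hs => hcop s _ ((Nat.modEq_zero_iff_dvd).1 hs))
          (fun s => p * (k * p + 1) ≤ T ∧ p * (k * p + 1) ∣ P * s + r)
          (fun s hs => (Nat.modEq_zero_iff_dvd).2 hs.2)
        refine this.trans ?_
        have hp' : (0 : ℝ) < p := by exact_mod_cast h0
        have hk' : (0 : ℝ) < k := by exact_mod_cast hk0
        rw [← mul_inv, ← div_eq_mul_inv]
        push_cast
        exact div_le_div_of_nonneg_left (by positivity) (by positivity) (tw_den _ _ hp'.le)
      · have : (Finset.range T).filter
          (fun s => p * (k * p + 1) ≤ T ∧ p * (k * p + 1) ∣ P * s + r) = ∅ := by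
          apply Finset.filter_eq_empty_iff.2
          intro s _ h
          exact hle h.1
        simp only [this, Finset.card_empty]
        push_cast
        positivity
    · rw [tw_prod, ← hS, ← mul_assoc]
      exact mul_le_mul_of_nonneg_left (tw_harm T) (by positivity)
  have cB2 : (B2.card : ℝ) ≤ 2 * T * S * (1 + Real.log P) := by
    refine (tw_biUnion _ _ (fun i => (2 * T) * (((i.1 : ℝ) ^ 2)⁻¹ * (i.2 : ℝ)⁻¹)) ?_).trans ?_
    · rintro ⟨p, m⟩ hpm
      simp only [Finset.mem_product, Finset.mem_Icc] at hpm
      obtain ⟨h0, h1⟩ := hQp p hpm.1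
      have hm0 : 0 < m := hpm.2.1
      have := tw_cntA P r T (m * p ^ 2) (m * p) (by positivity)
          ((Nat.mul_le_mul hpm.2.2 (Nat.pow_le_pow_left h1 2)).trans hT)
          (fun s hs => by
            have hd : m * p ∣ P * s + r := by
              refine (Nat.ModEq.dvd_iff hs ⟨p, by ring⟩).2 dvd_rfl
            have h2 := hcop s _ hd
            have h3 : Nat.Coprime p P := Nat.Coprime.coprime_dvd_left ⟨m, by ring⟩ h2
            have h4 := Nat.Coprime.mul_left h2 h3
            have e : m * p ^ 2 = m * p * p := by ring
            rw [e]; exact h4)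
          (fun s => P * s + r ≡ m * p [MOD m * p ^ 2]) (fun s hs => hs)
      refine this.trans (le_of_eq ?_)
      push_cast
      rw [← mul_inv, ← div_eq_mul_inv, mul_comm (m : ℝ)]
    · rw [tw_prod, ← hS, ← mul_assoc]
      exact mul_le_mul_of_nonneg_left (tw_harm P) (by positivity)
  have cA3 : (A3.card : ℝ) ≤ X * (z : ℝ)⁻¹ := by
    refine (tw_biUnion _ _ (fun p : ℕ => (X : ℝ) * ((p : ℝ) ^ 2)⁻¹) ?_).trans ?_
    · intro p hp
      have h0 := hRp p hp
      have := tw_cntB P r T (p ^ 2) hP hr hrP (by positivity)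
      rw [← div_eq_mul_inv]
      exact_mod_cast this
    · rw [← Finset.mul_sum]
      gcongr
  have cB3 : (B3.card : ℝ) ≤ X * ((z : ℝ)⁻¹ * (1 + Real.log X)) := by
    refine (tw_biUnion _ _ (fun i => (X : ℝ) * (((i.1 : ℝ) ^ 2)⁻¹ * (i.2 : ℝ)⁻¹)) ?_).trans ?_
    · rintro ⟨p, k⟩ hpk
      simp only [Finset.mem_product, Finset.mem_Icc] at hpk
      have h0 := hRp p hpk.1
      have hk0 : 0 < k := hpk.2.1
      have := tw_cntB P r T (p * (k * p + 1)) hP hr hrP (by positivity)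
      refine this.trans ?_
      have hp' : (0 : ℝ) < p := by exact_mod_cast h0
      have hk' : (0 : ℝ) < k := by exact_mod_cast hk0
      rw [← mul_inv, ← div_eq_mul_inv]
      push_cast
      rw [hX]
      push_cast
      exact div_le_div_of_nonneg_left (by positivity) (by positivity) (tw_den _ _ hp'.le)
    · rw [tw_prod]
      gcongr
      exact tw_harm X
  have hsub : (Finset.range T).filter (fun s => ¬ IsCyclicNum (P * s + r)) ⊆
      A1 ∪ B1 ∪ B2 ∪ A3 ∪ B3 := by
    intro s hs
    simp only [Finset.mem_filter, Finset.mem_range] at hs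
    obtain ⟨hsT, hbad⟩ := hs
    have hcX : P * s + r ≤ X := by
      have : P * (s + 1) ≤ P * T := Nat.mul_le_mul_left _ hsT
      rw [Nat.mul_add] at this
      omega
    have hc0 : 0 < P * s + r := by omega
    obtain ⟨p, hp, hpc, h⟩ := tw_totient _ hc0 hbad
    have hpP := hcop s p hpc
    have hpy : y < p := by
      by_contra hle
      have h1 := hPy p hp (by omega)
      have := Nat.Coprime.eq_one_of_dvd hpP h1
      exact hp.one_lt.ne' this
    have hpX : p ≤ X := (Nat.le_of_dvd hc0 hpc).trans hcX
    simp only [Finset.mem_union]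
    rcases le_or_gt p z with hpz | hpz
    · have hpQ : p ∈ Q := by
        simp only [hQ, Finset.mem_filter, Finset.mem_Ioc]
        exact ⟨⟨hpy, hpz⟩, hp⟩
      rcases h with h | ⟨k, hk, h⟩
      · left; left; left; left
        simp only [hA1, Finset.mem_biUnion, Finset.mem_filter, Finset.mem_range]
        exact ⟨p, hpQ, hsT, h⟩
      · rcases le_or_gt (p * (k * p + 1)) T with hle | hgt
        · left; left; left; right
          simp only [hB1, Finset.mem_biUnion, Finset.mem_filter, Finset.mem_range,
            Finset.mem_product, Finset.mem_Icc]
          refine ⟨(p, k), ⟨hpQ, hk, ?_⟩, hsT, hle, h⟩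
          have := hp.pos
          exact (tw_kle p k this).trans hle
        · left; left; right
          obtain ⟨m, hm⟩ := h
          have hm0 : 0 < m := by
            rcases Nat.eq_zero_or_pos m with h | h
            · subst h; omega
            · exact h
          have hmP : m ≤ P := by
            by_contra hlt
            have h1 : P + 1 ≤ m := by omega
            have h2 : (T + 1) * (P + 1) ≤ p * (k * p + 1) * m := Nat.mul_le_mul hgt h1
            rw [← hm] at h2
            have h3 : (T + 1) * (P + 1) = P * T + 1 + T + P := by ring
            omega
          simp only [hB2, Finset.mem_biUnion, Finset.mem_filter, Finset.mem_range,
            Finset.mem_product, Finset.mem_Icc]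
          refine ⟨(p, m), ⟨hpQ, hm0, hmP⟩, hsT, ?_⟩
          show P * s + r ≡ m * p [MOD m * p ^ 2]
          have e : P * s + r = m * p + m * p ^ 2 * k := by rw [hm]; ring
          rw [e]
          simp [Nat.ModEq]
    · have hpR : p ∈ R := by
        simp only [hR, Finset.mem_Ioc]
        exact ⟨hpz, hpX⟩
      rcases h with h | ⟨k, hk, h⟩
      · left; right
        simp only [hA3, Finset.mem_biUnion, Finset.mem_filter, Finset.mem_range]
        exact ⟨p, hpR, hsT, h⟩
      · right
        simp only [hB3, Finset.mem_biUnion, Finset.mem_filter, Finset.mem_range,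
            Finset.mem_product, Finset.mem_Icc]
        refine ⟨(p, k), ⟨hpR, hk, ?_⟩, hsT, h⟩
        have h1 := (Nat.le_of_dvd hc0 h).trans hcX
        have := hp.pos
        exact (tw_kle p k this).trans h1
  have hcard : (((Finset.range T).filter (fun s => ¬ IsCyclicNum (P * s + r))).card : ℝ) ≤
      A1.card + B1.card + B2.card + A3.card + B3.card := by
    have h1 := Finset.card_le_card hsub
    have h2 := Finset.card_union_le (A1 ∪ B1 ∪ B2 ∪ A3) B3
    have h3 := Finset.card_union_le (A1 ∪ B1 ∪ B2) A3
    have h4 := Finset.card_union_le (A1 ∪ B1) B2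
    have h5 := Finset.card_union_le A1 B1
    exact_mod_cast (by omega : _ ≤ A1.card + B1.card + B2.card + A3.card + B3.card)
  refine hcard.trans ?_
  have e : 2 * (T : ℝ) * S * (1 + (1 + Real.log T) + (1 + Real.log P))
        + (X : ℝ) * (1 + (1 + Real.log (X : ℝ))) / z =
      2 * T * S + 2 * T * S * (1 + Real.log T) + 2 * T * S * (1 + Real.log P) + X * (z : ℝ)⁻¹
      + X * ((z : ℝ)⁻¹ * (1 + Real.log X)) := by ring
  rw [e]
  linarith

lemma tw_exists (y : ℕ) (hyp : y.Prime) (hlog : 500 < Real.log y) :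
    ∃ c, y ≤ c + 1 ∧ IsCyclicNum c ∧ IsCyclicNum (c + 2) := by
  have hy1 : 3 ≤ y := by
    by_contra h
    have h1 : (y : ℝ) ≤ 2 := by exact_mod_cast (by omega : y ≤ 2)
    have h2 : (0 : ℝ) < y := by exact_mod_cast hyp.pos
    have := Real.log_le_sub_one_of_pos h2
    linarith
  set P := primorial y with hPdef
  have hP : 0 < P := primorial_pos y
  have hPy : ∀ p, p.Prime → p ≤ y → p ∣ P := by
    intro p hp hpy
    exact Finset.dvd_prod_of_mem (fun p => p) (by
      simp only [Finset.mem_filter, Finset.mem_range]; exact ⟨by omega, hp⟩)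
  have hyP : y ≤ P := Nat.le_of_dvd hP (hPy y hyp le_rfl)
  have h2P : 2 ∣ P := hPy 2 Nat.prime_two (by omega)
  set z := P ^ 2 with hz
  set T := P ^ 5 with hT
  have hT0 : 0 < T := by positivity
  have hTz : P * z ^ 2 ≤ T := le_of_eq (by rw [hz, hT]; ring)
  have hyz : y ≤ z := hyP.trans (Nat.le_self_pow (by norm_num) P)
  set S := ∑ p ∈ (Finset.Ioc y z).filter Nat.Prime, ((p : ℝ) ^ 2)⁻¹ with hS
  have b1 := tw_bad y P (P - 1) T z hP (by omega) (by omega)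
    ((Nat.coprime_self_sub_left (by omega)).2 (Nat.coprime_one_left P)) hPy (by positivity) hTz S hS
  have b2 := tw_bad y P (P + 1) T z hP (by omega) (by omega)
    (by simp) hPy (by positivity) hTz S hS
  set B := 2 * (T : ℝ) * S * (1 + (1 + Real.log T) + (1 + Real.log P))
        + ((P * T + 1 : ℕ) : ℝ) * (1 + (1 + Real.log ((P * T + 1 : ℕ) : ℝ))) / z with hB
  have hBT : 2 * B < T := by
    have hy0 : (0 : ℝ) < y := by exact_mod_cast hyp.pos
    have hyPR : (y : ℝ) ≤ P := by exact_mod_cast hyP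
    have hP0 : (0 : ℝ) < P := by linarith
    have hTR : (0 : ℝ) < T := by exact_mod_cast hT0
    set l := Real.log P with hl
    have hll : 500 < l := hlog.trans_le (Real.log_le_log hy0 hyPR)
    have hS0 : 0 ≤ S := Finset.sum_nonneg (fun _ _ => by positivity)
    have h4 : Real.log 4 ≤ 2 := by
      have : Real.log 4 = 2 * Real.log 2 := by
        rw [show (4 : ℝ) = 2 ^ 2 by norm_num, Real.log_pow]; norm_num
      have := Real.log_two_lt_d9
      linarith
    have h40 : 0 ≤ Real.log 4 := Real.log_nonneg (by norm_num)
    have hSl : S * Real.log y ≤ 2 * Real.log 4 / y := by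
      refine le_trans ?_ (tw_primesum y (by omega) z hyz)
      rw [hS, Finset.sum_mul]
      apply Finset.sum_le_sum
      intro p hp
      simp only [Finset.mem_filter, Finset.mem_Ioc] at hp
      rw [mul_comm, ← div_eq_mul_inv]
      gcongr
      exact hp.1.1.le
    have hlP : l ≤ Real.log 4 * y := by
      have h1 : (P : ℝ) ≤ 4 ^ y := by exact_mod_cast primorial_le_four_pow y
      have h2 := Real.log_le_log hP0 h1
      rw [Real.log_pow] at h2
      linarith
    have hSl2 : S * l * Real.log y ≤ 8 := by
      calc S * l * Real.log y = (S * Real.log y) * l := by ring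
        _ ≤ (2 * Real.log 4 / y) * (Real.log 4 * y) := by
            apply mul_le_mul hSl hlP (by linarith) (by positivity)
        _ = 2 * (Real.log 4 * Real.log 4) := by field_simp
        _ ≤ 8 := by nlinarith
    have hSl3 : S * l < 8 / 500 := by
      have : 0 ≤ S * l := mul_nonneg hS0 (by linarith)
      rcases this.eq_or_lt with h | h
      · rw [← h]; norm_num
      · nlinarith
    have hlsq : 250 * l ≤ P := by
      have h1 := Real.quadratic_le_exp_of_nonneg (x := l) (by linarith)
      rw [hl, Real.exp_log hP0, ← hl] at h1
      nlinarith
    have hlT : Real.log T = 5 * l := by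
      rw [hT]; push_cast; rw [Real.log_pow, hl]; norm_num
    have hXle : ((P * T + 1 : ℕ) : ℝ) ≤ 2 * (P * T) := by
      push_cast
      have : (1 : ℝ) ≤ (P : ℝ) * T := by exact_mod_cast Nat.mul_pos hP hT0
      linarith
    have hlX : Real.log ((P * T + 1 : ℕ) : ℝ) ≤ 7 * l := by
      have h1 : ((P * T + 1 : ℕ) : ℝ) ≤ (P : ℝ) ^ 7 := by
        refine hXle.trans ?_
        have : (T : ℝ) = (P : ℝ) ^ 5 := by rw [hT]; push_cast; rfl
        rw [this]
        have h2 : (2 : ℝ) ≤ P := by linarith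
        calc 2 * ((P : ℝ) * P ^ 5) ≤ P * ((P : ℝ) * P ^ 5) := by gcongr
          _ = _ := by ring
      have h2 := Real.log_le_log (by positivity) h1
      rw [Real.log_pow] at h2
      exact_mod_cast h2
    have hB1 : 2 * (T : ℝ) * S * (1 + (1 + Real.log T) + (1 + l)) ≤ T * (18 * (S * l)) := by
      rw [hlT]
      calc 2 * (T : ℝ) * S * (1 + (1 + 5 * l) + (1 + l)) ≤ 2 * (T : ℝ) * S * (9 * l) := by
            apply mul_le_mul_of_nonneg_left _ (by positivity)
            linarith
        _ = _ := by ring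
    have hB2 : ((P * T + 1 : ℕ) : ℝ) * (1 + (1 + Real.log ((P * T + 1 : ℕ) : ℝ))) / z
        ≤ T * (18 * (l / P)) := by
      have hzR : (z : ℝ) = (P : ℝ) ^ 2 := by rw [hz]; push_cast; rfl
      rw [hzR]
      calc _ ≤ (2 * (P * T)) * (9 * l) / (P : ℝ) ^ 2 := by
            gcongr
            linarith
        _ = _ := by field_simp; ring
    have hlP2 : l / P ≤ 1 / 250 := by
      rw [div_le_div_iff₀ hP0 (by norm_num)]; linarith
    have : B ≤ T * (18 * (S * l) + 18 * (l / P)) := by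
      rw [hB]; linarith
    have h9 : 18 * (S * l) + 18 * (l / P) < 1 / 2 := by linarith
    have := mul_lt_mul_of_pos_left h9 hTR
    linarith
  by_contra hno
  push Not at hno
  have hcov : Finset.range T ⊆ (Finset.range T).filter (fun s => ¬ IsCyclicNum (P * s + (P - 1)))
      ∪ (Finset.range T).filter (fun s => ¬ IsCyclicNum (P * s + (P + 1))) := by
    intro s hs
    simp only [Finset.mem_union, Finset.mem_filter]
    by_cases h : IsCyclicNum (P * s + (P - 1))
    · right
      refine ⟨hs, ?_⟩
      have h1 := hno _ (by omega) h
      have e : P * s + (P - 1) + 2 = P * s + (P + 1) := by omega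
      rw [e] at h1
      exact h1
    · left
      exact ⟨hs, h⟩
  have h1 := (Finset.card_le_card hcov).trans (Finset.card_union_le _ _)
  rw [Finset.card_range] at h1
  have h2 : (T : ℝ) ≤ (((Finset.range T).filter
      (fun s => ¬ IsCyclicNum (P * s + (P - 1)))).card : ℝ) + (((Finset.range T).filter
      (fun s => ¬ IsCyclicNum (P * s + (P + 1)))).card : ℝ) := by exact_mod_cast h1
  linarith

theorem infinite_twin_cyclics :
    {c : ℕ | IsCyclicNum c ∧ IsCyclicNum (c + 2)}.Infinite := by
  rw [Set.infinite_iff_exists_gt]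
  intro N
  obtain ⟨M, hM⟩ := exists_nat_gt (Real.exp 500)
  obtain ⟨y, hy, hyp⟩ := Nat.exists_infinite_primes (N + M + 2)
  have hy' : Real.exp 500 < y := by
    have : (M : ℝ) ≤ y := by exact_mod_cast (by omega : M ≤ y)
    linarith
  have hlog : 500 < Real.log y := by
    rw [Real.lt_log_iff_exp_lt (by exact_mod_cast hyp.pos)]
    exact hy'
  obtain ⟨c, hc, h1, h2⟩ := tw_exists y hyp hlog
  exact ⟨c, ⟨h1, h2⟩, by omega⟩
end
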